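/- arXiv:0707.2728 — 3 statements merged into one kernel-verified Lean document; each statement's English description precedes it below -/
import Mathlib

section
/- If \psi_i, \psi_j are eigenfunctions of T_a^v with eigenvalues \lambda_i, \lambda_j, orthonormal in L^2_{q,2,v} (i.e. \int_0^\infty \psi_i \psi_j t^{2v+1} d_q t = \delta_{ij}), then their restrictions to [0,a]_q satisfy \int_0^a \psi_i(x)\psi_j(x) x^{2v+1} d_q x = \lambda_i \lambda_j \delta_{ij}. -/
noncomputable def qPoch (a q : ℝ) (n : ℕ) : ℝ := ∏ i ∈ Finset.range n, (1 - a * q ^ i)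

noncomputable def qPochInf (a q : ℝ) : ℝ := ∏' i : ℕ, (1 - a * q ^ i)

/-- Normalized Hahn–Exton q-Bessel function `j_v(z, q²)` (complex argument). -/
noncomputable def jv (v q : ℝ) (z : ℂ) : ℂ :=
  ∑' n : ℕ, (-1 : ℂ) ^ n * (q : ℂ) ^ (n * (n + 1)) * z ^ (2 * n) /
    ((qPoch (q ^ 2) (q ^ 2) n : ℝ) * (qPoch (q ^ (2 * v + 2 : ℝ)) (q ^ 2) n : ℝ) : ℝ)

/-- Normalized Hahn–Exton q-Bessel function `j_v(x, q²)` (real argument). -/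
noncomputable def jvR (v q x : ℝ) : ℝ :=
  ∑' n : ℕ, (-1 : ℝ) ^ n * q ^ (n * (n + 1)) * x ^ (2 * n) /
    (qPoch (q ^ 2) (q ^ 2) n * qPoch (q ^ (2 * v + 2 : ℝ)) (q ^ 2) n)

noncomputable def cqv (q v : ℝ) : ℝ :=
  (1 / (1 - q)) * qPochInf (q ^ (2 * v + 2 : ℝ)) (q ^ 2) / qPochInf (q ^ 2) (q ^ 2)

/-- Jackson q-integral on `[0,a]`. -/
noncomputable def qInt0 (q a : ℝ) (f : ℝ → ℝ) : ℝ :=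
  (1 - q) * a * ∑' n : ℕ, q ^ n * f (a * q ^ n)

/-- Jackson q-integral on `[0,∞)`. -/
noncomputable def qIntInf (q : ℝ) (f : ℝ → ℝ) : ℝ :=
  (1 - q) * ∑' n : ℤ, q ^ n * f (q ^ n)

/-- Complex-valued Jackson q-integral on `[0,a]`. -/
noncomputable def qIntC0 (q a : ℝ) (f : ℝ → ℂ) : ℂ :=
  ((1 - q) * a : ℝ) * ∑' n : ℕ, (q ^ n : ℝ) * f (a * q ^ n)

/-- The operator `T_a^v`. -/
noncomputable def Tav (q v a : ℝ) (u : ℝ → ℝ) (x : ℝ) : ℝ :=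
  cqv q v * qInt0 q a (fun t => u t * jvR v q (x * t) * t ^ (2 * v + 1 : ℝ))

/-- The q-Bessel Fourier transform `𝓕_{q,v}`. -/
noncomputable def Fqv (q v : ℝ) (f : ℝ → ℝ) (x : ℝ) : ℝ :=
  cqv q v * qIntInf q (fun t => f t * jvR v q (x * t) * t ^ (2 * v + 1 : ℝ))

/-- Membership in `L²_{q,v,a}` (functions on `[0,a]_q`). -/
def memL2a (q v a : ℝ) (f : ℝ → ℝ) : Prop :=
  Summable (fun n : ℕ => q ^ n * (f (a * q ^ n)) ^ 2 * (a * q ^ n) ^ (2 * v + 1 : ℝ))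

/-- Membership in `L²_{q,2,v}` (even functions on `ℝ_q`, given on `ℝ_q⁺`). -/
def memL2 (q v : ℝ) (f : ℝ → ℝ) : Prop :=
  Summable (fun n : ℤ => q ^ n * (f (q ^ n)) ^ 2 * ((q : ℝ) ^ n) ^ (2 * v + 1 : ℝ))

/-- Inner product on `L²_{q,2,v}`. -/
noncomputable def qInner (q v : ℝ) (f g : ℝ → ℝ) : ℝ :=
  qIntInf q (fun t => f t * g t * t ^ (2 * v + 1 : ℝ))

/-- The kernel `k(x,y)`. -/
noncomputable def kker (q v a x y : ℝ) : ℝ :=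
  cqv q v ^ 2 * qInt0 q a (fun t => jvR v q (x * t) * jvR v q (y * t) * t ^ (2 * v + 1 : ℝ))

theorem aux_triple (F : ℤ × ℤ × ℤ → ℝ) (hF : Summable F) :
    ∑' k, F k = ∑' a, ∑' b, ∑' c, F (a, b, c) := by
  rw [hF.tsum_prod]
  refine tsum_congr fun a => ?_
  exact (hF.prod_factor a).tsum_prod

theorem aux_mul3 (f g h : ℤ → ℝ) (hf : Summable f) (hg : Summable g) (hh : Summable h) :
    Summable (fun x : ℤ × ℤ × ℤ => f x.1 * (g x.2.1 * h x.2.2)) := by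
  have h1 : Summable (fun x : ℤ × ℤ => g x.1 * h x.2) :=
    summable_mul_of_summable_norm hg.norm hh.norm
  exact summable_mul_of_summable_norm (f := f) (g := fun x : ℤ × ℤ => g x.1 * h x.2) hf.norm h1.norm

def auxE1 : ℤ × ℤ × ℤ ≃ ℤ × ℤ × ℤ where
  toFun x := (x.2.1, x.1 + x.2.1, x.1 + x.2.2)
  invFun y := (y.2.1 - y.1, y.1, y.2.2 - y.2.1 + y.1)
  left_inv x := by ext <;> simp
  right_inv x := by ext <;> simp

def auxE1b : ℤ × ℤ × ℤ ≃ ℤ × ℤ × ℤ where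
  toFun x := (x.2.2, x.1 + x.2.1, x.1 + x.2.2)
  invFun y := (y.2.2 - y.1, y.2.1 - y.2.2 + y.1, y.1)
  left_inv x := by ext <;> simp
  right_inv x := by ext <;> simp

def auxE2 : ℤ × ℤ × ℤ ≃ ℤ × ℤ × ℤ where
  toFun x := (x.2.2, x.1, x.2.1)
  invFun y := (y.2.1, y.2.2, y.1)
  left_inv x := by ext <;> simp
  right_inv x := by ext <;> simp

theorem aux_parseval (K g h : ℤ → ℝ) (hK : Summable K)
    (orth : ∀ s, ∑' k, K k * K (k + s) = if s = 0 then 1 else 0)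
    (hg : Summable fun n => g n ^ 2) (hh : Summable fun n => h n ^ 2) :
    ∑' m, (∑' n, K (m + n) * g n) * (∑' n, K (m + n) * h n) = ∑' n, g n * h n := by
  have hF : Summable (fun x : ℤ × ℤ × ℤ =>
      (K (x.1 + x.2.1) * g x.2.1) * (K (x.1 + x.2.2) * h x.2.2)) := by
    have h1 := (auxE1.summable_iff.2 (aux_mul3 _ _ _ hg hK.abs hK.abs))
    have h2 := (auxE1b.summable_iff.2 (aux_mul3 _ _ _ hh hK.abs hK.abs))
    refine Summable.of_norm_bounded (h1.add h2) ?_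
    rintro ⟨m, n, n'⟩
    simp only [auxE1, auxE1b, Function.comp, Equiv.coe_fn_mk, Real.norm_eq_abs, abs_mul]
    have e : |g n| * |h n'| ≤ g n ^ 2 + h n' ^ 2 := by
      rw [← sq_abs (g n), ← sq_abs (h n')]
      nlinarith [sq_nonneg (|g n| - |h n'|), sq_nonneg (|g n|), sq_nonneg (|h n'|)]
    have := mul_le_mul_of_nonneg_right e (by positivity : 0 ≤ |K (m + n)| * |K (m + n')|)
    nlinarith
  have hL : ∑' m, (∑' n, K (m + n) * g n) * (∑' n, K (m + n) * h n)
      = ∑' m, ∑' n, ∑' n', (K (m + n) * g n) * (K (m + n') * h n') := by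
    refine tsum_congr fun m => ?_
    rw [← tsum_mul_right]
    refine tsum_congr fun n => ?_
    rw [tsum_mul_left]
  rw [hL, ← aux_triple _ hF, ← auxE2.tsum_eq]
  refine (aux_triple _ (auxE2.summable_iff.2 hF)).trans ?_
  refine tsum_congr fun n => ?_
  have h3 : ∀ n', ∑' m, (K (m + n) * g n) * (K (m + n') * h n')
      = if n' = n then g n * h n else 0 := by
    intro n'
    have : ∀ m, (K (m + n) * g n) * (K (m + n') * h n')
      = (g n * h n') * (K (m + n) * K (m + n + (n' - n))) := by
      intro m; rw [show m + n + (n' - n) = m + n' by ring]; ring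
    simp_rw [this]
    have h5 := (Equiv.addRight n).tsum_eq (fun k => K k * K (k + (n' - n)))
    simp only [Equiv.coe_addRight] at h5
    rw [tsum_mul_left, h5, orth]
    by_cases hn : n' = n
    · subst hn; simp
    · simp [hn, sub_eq_zero]
  simp only [auxE2, Function.comp, Equiv.coe_fn_mk]
  simp_rw [h3]
  rw [tsum_ite_eq]

def auxE3 : ℤ × ℤ × ℤ ≃ ℤ × ℤ × ℤ where
  toFun x := (x.2.1, x.1 + x.2.1, x.2.2)
  invFun y := (y.2.1 - y.1, y.1, y.2.2)
  left_inv x := by ext <;> simp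
  right_inv x := by ext <;> simp

def auxE4 (s : ℤ) : ℤ × ℤ × ℤ ≃ ℤ × ℤ × ℤ where
  toFun x := (x.1 - x.2.1 - x.2.2 - s, x.2.1, x.2.2)
  invFun y := (y.1 + y.2.1 + y.2.2 + s, y.2.1, y.2.2)
  left_inv x := by ext <;> simp <;> ring
  right_inv x := by ext <;> simp <;> ring

def auxE5 : ℤ × ℤ ≃ ℤ × ℤ where
  toFun x := (x.2, x.1 + x.2)
  invFun y := (y.2 - y.1, y.1)
  left_inv x := by ext <;> simp
  right_inv x := by ext <;> simp

theorem aux_orth (α β K : ℤ → ℝ) (hα : Summable α) (hβ : Summable β)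
    (hK : ∀ k, K k = ∑' n, α n * β (k + n))
    (hc : ∀ u, ∑' n, α n * β (u - n) = if u = 0 then 1 else 0) :
    Summable K ∧ ∀ s, ∑' k, K k * K (k + s) = if s = 0 then 1 else 0 := by
  constructor
  · have h1 : Summable (fun x : ℤ × ℤ => α x.1 * β x.2) :=
      summable_mul_of_summable_norm hα.norm hβ.norm
    have h2 := (auxE5.summable_iff.2 h1).prod
    rw [show K = _ from funext hK]
    exact h2
  · intro s
    obtain ⟨B, hB⟩ : ∃ B, ∀ n, |β n| ≤ B :=
      ⟨∑' n, |β n|, fun n => hβ.abs.le_tsum n (fun _ _ => abs_nonneg _)⟩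
    have hF : Summable (fun x : ℤ × ℤ × ℤ =>
        (α x.2.1 * β (x.1 + x.2.1)) * (α x.2.2 * β (x.1 + s + x.2.2))) := by
      have h1 := (auxE3.summable_iff.2 (aux_mul3 _ _ _ hα.abs hβ.abs hα.abs)).mul_left B
      refine Summable.of_norm_bounded h1 ?_
      rintro ⟨k, n, m⟩
      simp only [auxE3, Function.comp, Equiv.coe_fn_mk, Real.norm_eq_abs, abs_mul]
      have := mul_le_mul_of_nonneg_right (hB (k + s + m))
        (by positivity : 0 ≤ |α n| * (|β (k + n)| * |α m|))
      nlinarith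
    have hL : ∑' k, K k * K (k + s)
        = ∑' k, ∑' n, ∑' m, (α n * β (k + n)) * (α m * β (k + s + m)) := by
      refine tsum_congr fun k => ?_
      rw [hK, hK, ← tsum_mul_right]
      refine tsum_congr fun n => ?_
      rw [tsum_mul_left]
    rw [hL, ← aux_triple _ hF, ← (auxE4 s).tsum_eq]
    refine (aux_triple _ ((auxE4 s).summable_iff.2 hF)).trans ?_
    simp only [auxE4, Function.comp, Equiv.coe_fn_mk]
    have h3 : ∀ u, ∑' n, ∑' m, (α n * β (u - n - m - s + n)) * (α m * β (u - n - m - s + s + m))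
        = if u = 0 then (if s = 0 then 1 else 0) else 0 := by
      intro u
      have h4 : ∀ n m, (α n * β (u - n - m - s + n)) * (α m * β (u - n - m - s + s + m))
          = (α n * β (u - n)) * (α m * β (u - s - m)) := by
        intro n m
        rw [show u - n - m - s + n = u - s - m by ring, show u - n - m - s + s + m = u - n by ring]
        ring
      simp_rw [h4, tsum_mul_left, tsum_mul_right, hc]
      by_cases hu : u = 0
      · subst hu; simp
      · simp [hu]
    simp_rw [h3]
    rw [tsum_ite_eq]

noncomputable def auxA (p : ℝ) (n : ℕ) : ℝ := (-1) ^ n * p ^ (n * (n - 1) / 2) / qPoch p p n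
noncomputable def auxB (p : ℝ) (n : ℕ) : ℝ := 1 / qPoch p p n

theorem aux_tri (n : ℕ) : (n + 1) * (n + 1 - 1) / 2 = n * (n - 1) / 2 + n := by
  rw [← Nat.choose_two_right, ← Nat.choose_two_right, Nat.choose_succ_succ' n 1]; simp; ring

theorem aux_poch_succ (x p : ℝ) (n : ℕ) : qPoch x p (n + 1) = qPoch x p n * (1 - x * p ^ n) := by
  simp [qPoch, Finset.prod_range_succ]

theorem aux_poch_pos (x p : ℝ) (hx : x < 1) (hx0 : 0 ≤ x) (h0 : 0 < p) (h1 : p < 1) (n : ℕ) :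
    0 < qPoch x p n := by
  refine Finset.prod_pos fun i _ => ?_
  have h3 : p ^ i ≤ 1 := pow_le_one₀ h0.le h1.le
  have : 0 < p ^ i := by positivity
  nlinarith

theorem auxA_succ (p : ℝ) (h0 : 0 < p) (h1 : p < 1) (n : ℕ) :
    auxA p (n + 1) * (1 - p ^ (n + 1)) = - p ^ n * auxA p n := by
  have h2 := (aux_poch_pos p p h1 h0.le h0 h1 n).ne'
  have h3 : 1 - p ^ (n + 1) ≠ 0 := by
    have : p ^ (n + 1) < 1 := pow_lt_one₀ h0.le h1 (by simp)
    linarith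
  unfold auxA
  rw [aux_tri, aux_poch_succ, show p * p ^ n = p ^ (n + 1) by ring]
  field_simp
  ring

theorem auxB_succ (p : ℝ) (h0 : 0 < p) (h1 : p < 1) (n : ℕ) :
    auxB p (n + 1) * (1 - p ^ (n + 1)) = auxB p n := by
  have h2 := (aux_poch_pos p p h1 h0.le h0 h1 n).ne'
  have h3 : 1 - p ^ (n + 1) ≠ 0 := by
    have : p ^ (n + 1) < 1 := pow_lt_one₀ h0.le h1 (by simp)
    linarith
  unfold auxB
  rw [aux_poch_succ, show p * p ^ n = p ^ (n + 1) by ring]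
  field_simp

theorem auxA_zero (p : ℝ) : auxA p 0 = 1 := by simp [auxA, qPoch]
theorem auxB_zero (p : ℝ) : auxB p 0 = 1 := by simp [auxB, qPoch]

theorem aux_conv (p : ℝ) (h0 : 0 < p) (h1 : p < 1) (N : ℕ) :
    ∑ x ∈ Finset.HasAntidiagonal.antidiagonal N, auxA p x.1 * auxB p x.2 = if N = 0 then 1 else 0 := by
  set A : PowerSeries ℝ := PowerSeries.mk (auxA p) with hA
  set B : PowerSeries ℝ := PowerSeries.mk (auxB p) with hB
  have eA : A = (1 - PowerSeries.X) * PowerSeries.rescale p A := by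
    ext n
    rw [sub_mul, one_mul, map_sub]
    cases n with
    | zero => simp [hA]
    | succ n =>
      rw [PowerSeries.coeff_succ_X_mul]
      simp only [hA, PowerSeries.coeff_rescale, PowerSeries.coeff_mk]
      linear_combination auxA_succ p h0 h1 n
  have eB : PowerSeries.rescale p B = (1 - PowerSeries.X) * B := by
    ext n
    rw [sub_mul, one_mul, map_sub]
    cases n with
    | zero => simp [hB]
    | succ n =>
      rw [PowerSeries.coeff_succ_X_mul]
      simp only [hB, PowerSeries.coeff_rescale, PowerSeries.coeff_mk]
      linear_combination -auxB_succ p h0 h1 n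
  have eAB : A * B = PowerSeries.rescale p (A * B) := by
    rw [map_mul, eB]
    nth_rewrite 1 [eA]
    ring
  have hc : PowerSeries.coeff N (A * B) = ∑ x ∈ Finset.HasAntidiagonal.antidiagonal N, auxA p x.1 * auxB p x.2 := by
    rw [PowerSeries.coeff_mul]; simp [hA, hB]
  rw [← hc]
  by_cases hN : N = 0
  · subst hN; simp [hA, hB, auxA_zero, auxB_zero]
  · have := congrArg (PowerSeries.coeff N) eAB
    rw [PowerSeries.coeff_rescale] at this
    have hp : p ^ N < 1 := pow_lt_one₀ h0.le h1 hN
    simp only [hN, if_false]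
    have h3 : (1 - p ^ N) * PowerSeries.coeff N (A * B) = 0 := by linarith
    rcases mul_eq_zero.1 h3 with h | h
    · linarith
    · exact h

theorem aux_tend_p (p : ℝ) (h0 : 0 < p) (h1 : p < 1) :
    Filter.Tendsto (fun n : ℕ => 1 - p ^ (n + 1)) Filter.atTop (nhds 1) := by
  have := (tendsto_pow_atTop_nhds_zero_of_lt_one h0.le h1).comp (Filter.tendsto_add_atTop_nat 1)
  simpa using this.const_sub 1

theorem auxA_summable (p : ℝ) (h0 : 0 < p) (h1 : p < 1) (x : ℝ) :
    Summable (fun n => auxA p n * x ^ n) := by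
  by_cases hx : x = 0
  · subst hx
    refine summable_of_ne_finset_zero (s := {0}) ?_
    intro b hb
    have : b ≠ 0 := by simpa using hb
    simp [this]
  have hpos : ∀ n, auxA p n ≠ 0 := fun n => by
    have := (aux_poch_pos p p h1 h0.le h0 h1 n).ne'
    unfold auxA
    have h2 : p ≠ 0 := h0.ne'
    simp [this, h2]
  refine summable_of_ratio_test_tendsto_lt_one (l := 0) one_pos
    (Filter.Eventually.of_forall fun n => mul_ne_zero (hpos n) (pow_ne_zero _ hx)) ?_
  have h2 : Filter.Tendsto (fun n : ℕ => |x| * p ^ n / (1 - p ^ (n + 1))) Filter.atTop (nhds 0) := by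
    have := ((tendsto_pow_atTop_nhds_zero_of_lt_one h0.le h1).const_mul |x|).div
      (aux_tend_p p h0 h1) one_ne_zero
    simp only [mul_zero, zero_div, div_one] at this
    exact this
  refine h2.congr fun n => ?_
  have h3 : 0 < 1 - p ^ (n + 1) := by
    have : p ^ (n + 1) < 1 := pow_lt_one₀ h0.le h1 (by simp)
    linarith
  have h4 : auxA p (n + 1) = - p ^ n * auxA p n / (1 - p ^ (n + 1)) := by
    rw [← auxA_succ p h0 h1 n]; field_simp
  rw [h4]
  simp only [Real.norm_eq_abs, abs_mul, abs_div, abs_neg, abs_pow, abs_of_pos h3, abs_of_pos h0]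
  have h5 := abs_pos.2 (hpos n)
  have h6 := abs_pos.2 hx
  field_simp
  try ring

theorem auxB_summable (p : ℝ) (h0 : 0 < p) (h1 : p < 1) (x : ℝ) (hx0 : 0 < x) (hx : x < 1) :
    Summable (fun n => auxB p n * x ^ n) := by
  have hpos : ∀ n, 0 < auxB p n := fun n => by
    have := (aux_poch_pos p p h1 h0.le h0 h1 n)
    unfold auxB
    positivity
  refine summable_of_ratio_test_tendsto_lt_one (l := x) hx
    (Filter.Eventually.of_forall fun n => mul_ne_zero (hpos n).ne' (pow_ne_zero _ hx0.ne')) ?_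
  have h2 : Filter.Tendsto (fun n : ℕ => x / (1 - p ^ (n + 1))) Filter.atTop (nhds x) := by
    have := (tendsto_const_nhds (x := x)).div (aux_tend_p p h0 h1) one_ne_zero
    simp only [mul_zero, zero_div, div_one] at this
    exact this
  refine h2.congr fun n => ?_
  have h3 : 0 < 1 - p ^ (n + 1) := by
    have : p ^ (n + 1) < 1 := pow_lt_one₀ h0.le h1 (by simp)
    linarith
  have h4 : auxB p (n + 1) = auxB p n / (1 - p ^ (n + 1)) := by
    rw [← auxB_succ p h0 h1 n]; field_simp
  rw [h4]
  have h5 := hpos n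
  simp only [Real.norm_eq_abs, abs_mul, abs_div, abs_pow, abs_of_pos h3, abs_of_pos hx0, abs_of_pos h5]
  field_simp
  try ring

theorem aux_fe (p : ℝ) (h0 : 0 < p) (h1 : p < 1) (x : ℝ) :
    ∑' n, auxA p n * x ^ n = (1 - x) * ∑' n, auxA p n * (p * x) ^ n := by
  have e1 := (auxA_summable p h0 h1 x)
  have e2 := (auxA_summable p h0 h1 (p * x))
  have e3 := (summable_nat_add_iff 1).2 e2
  rw [sub_mul, one_mul, e1.tsum_eq_zero_add]
  nth_rewrite 1 [e2.tsum_eq_zero_add]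
  rw [← tsum_mul_left]
  have : ∑' n, auxA p (n + 1) * x ^ (n + 1) = ∑' n, (auxA p (n + 1) * (p * x) ^ (n + 1)
      - x * (auxA p n * (p * x) ^ n)) := by
    refine tsum_congr fun n => ?_
    linear_combination x ^ (n + 1) * auxA_succ p h0 h1 n
  rw [this, e3.tsum_sub (e2.mul_left x)]
  simp
  try ring

theorem aux_fe_iter (p : ℝ) (h0 : 0 < p) (h1 : p < 1) (x : ℝ) (N : ℕ) :
    ∑' n, auxA p n * x ^ n = qPoch x p N * ∑' n, auxA p n * (p ^ N * x) ^ n := by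
  induction N with
  | zero => simp [qPoch]
  | succ N ih =>
    rw [ih, aux_poch_succ, aux_fe p h0 h1 (p ^ N * x), show p * (p ^ N * x) = p ^ (N + 1) * x by ring]
    ring

theorem aux_euler (p : ℝ) (h0 : 0 < p) (h1 : p < 1) (x : ℝ) :
    ∑' n, auxA p n * x ^ n = qPochInf x p := by
  have hm : Multipliable (fun i : ℕ => 1 - x * p ^ i) := by
    have := Real.multipliable_one_add_of_summable (f := fun i : ℕ => - (x * p ^ i))
      (((summable_geometric_of_lt_one h0.le h1).mul_left x).neg)
    simpa [sub_eq_add_neg] using this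
  have t1 : Filter.Tendsto (fun N => qPoch x p N) Filter.atTop (nhds (qPochInf x p)) :=
    hm.tendsto_prod_tprod_nat
  have t2 : Filter.Tendsto (fun N : ℕ => ∑' n, auxA p n * (p ^ N * x) ^ n) Filter.atTop (nhds 1) := by
    have : (1 : ℝ) = ∑' n : ℕ, auxA p n * (0 : ℝ) ^ n := by
      rw [tsum_eq_single 0]
      · simp [auxA_zero]
      · intro n hn; simp [hn]
    rw [this]
    refine tendsto_tsum_of_dominated_convergence (auxA_summable p h0 h1 x).norm ?_ ?_
    · intro n
      have := ((tendsto_pow_atTop_nhds_zero_of_lt_one h0.le h1).mul_const x)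
      rw [zero_mul] at this
      exact (this.pow n).const_mul _
    · refine Filter.Eventually.of_forall fun N n => ?_
      simp only [Real.norm_eq_abs, abs_mul, abs_pow, abs_of_pos h0]
      have h3 : p ^ N ≤ 1 := pow_le_one₀ h0.le h1.le
      have h4 : p ^ N * |x| ≤ |x| := mul_le_of_le_one_left (abs_nonneg x) h3
      gcongr
  have t3 := t1.mul t2
  rw [mul_one] at t3
  refine tendsto_nhds_unique (tendsto_const_nhds.congr fun N => ?_) t3
  exact aux_fe_iter p h0 h1 x N

theorem aux_inf_split (p : ℝ) (h0 : 0 < p) (h1 : p < 1) (x : ℝ) (N : ℕ) :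
    qPochInf x p = qPoch x p N * qPochInf (p ^ N * x) p := by
  rw [← aux_euler p h0 h1, ← aux_euler p h0 h1, ← aux_fe_iter p h0 h1]

noncomputable def auxBZ (p : ℝ) (l : ℤ) : ℝ := if 0 ≤ l then auxB p l.toNat else 0

theorem aux_inf_ne (p : ℝ) (h0 : 0 < p) (h1 : p < 1) : qPochInf p p ≠ 0 := by
  have h := tsum_mul_tsum_eq_tsum_sum_antidiagonal_of_summable_norm
    (auxA_summable p h0 h1 p).norm (auxB_summable p h0 h1 p h0 h1).norm
  have h2 : ∀ N : ℕ, ∑ x ∈ Finset.HasAntidiagonal.antidiagonal N,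
      auxA p x.1 * p ^ x.1 * (auxB p x.2 * p ^ x.2) = if N = 0 then 1 else 0 := by
    intro N
    have h3 : ∀ x ∈ Finset.HasAntidiagonal.antidiagonal N,
      auxA p x.1 * p ^ x.1 * (auxB p x.2 * p ^ x.2) = p ^ N * (auxA p x.1 * auxB p x.2) := by
      intro x hx
      rw [← Finset.HasAntidiagonal.mem_antidiagonal.1 hx, pow_add]; ring
    rw [Finset.sum_congr rfl h3, ← Finset.mul_sum, aux_conv p h0 h1]
    by_cases hN : N = 0
    · subst hN; simp
    · simp [hN]
  simp_rw [h2] at h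
  rw [tsum_ite_eq, aux_euler p h0 h1] at h
  intro h5
  rw [h5] at h
  simp at h

theorem aux_inf_z (p : ℝ) (h0 : 0 < p) (h1 : p < 1) (l : ℤ) :
    qPochInf (p ^ (l + 1)) p = qPochInf p p * auxBZ p l := by
  by_cases hl : 0 ≤ l
  · obtain ⟨N, rfl⟩ := Int.eq_ofNat_of_zero_le hl
    have h2 := (aux_poch_pos p p h1 h0.le h0 h1 N).ne'
    rw [aux_inf_split p h0 h1 p N]
    have : p ^ ((N : ℤ) + 1) = p ^ N * p := by
      rw [zpow_add₀ h0.ne']; simp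
    rw [this]
    simp only [auxBZ, auxB, hl, if_true, Int.toNat_natCast]
    field_simp
  · obtain ⟨M, hM⟩ := Int.eq_ofNat_of_zero_le (show 0 ≤ -(l + 1) by omega)
    have : l + 1 = -(M : ℤ) := by omega
    rw [aux_inf_split p h0 h1 _ (M + 1), aux_poch_succ, this]
    simp [auxBZ, hl, h0.ne']

theorem aux_sym (p w : ℝ) (h0 : 0 < p) (h1 : p < 1) (w0 : 0 < w) (w1 : w < 1) (k : ℤ) :
    qPochInf w p / qPochInf p p * ∑' n : ℕ, auxA p n * (p ^ (k + 1)) ^ n / qPoch w p n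
      = ∑' m : ℕ, auxA p m * w ^ m * auxBZ p (k + m) := by
  set y := p ^ (k + 1) with hy
  have hS : Summable (fun x : ℕ × ℕ => auxA p x.1 * y ^ x.1 * (auxA p x.2 * (p ^ x.1 * w) ^ x.2)) := by
    have h2 : Summable (fun x : ℕ × ℕ => (auxA p x.1 * y ^ x.1) * (auxA p x.2 * w ^ x.2)) :=
      summable_mul_of_summable_norm (auxA_summable p h0 h1 y).norm (auxA_summable p h0 h1 w).norm
    refine Summable.of_norm_bounded h2.norm ?_
    rintro ⟨n, m⟩
    simp only [Real.norm_eq_abs, abs_mul, abs_pow, abs_of_pos h0, abs_of_pos w0]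
    have h3 : p ^ n ≤ 1 := pow_le_one₀ h0.le h1.le
    have h4 : p ^ n * w ≤ w := mul_le_of_le_one_left w0.le h3
    gcongr
  have e1 : qPochInf w p * ∑' n : ℕ, auxA p n * y ^ n / qPoch w p n
      = ∑' n : ℕ, ∑' m : ℕ, auxA p n * y ^ n * (auxA p m * (p ^ n * w) ^ m) := by
    rw [← tsum_mul_left]
    refine tsum_congr fun n => ?_
    have h2 := (aux_poch_pos w p w1 w0.le h0 h1 n).ne'
    rw [tsum_mul_left, aux_euler p h0 h1, aux_inf_split p h0 h1 w n]
    field_simp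
  have e3 := Summable.tsum_comm
    (f := fun n m : ℕ => auxA p n * y ^ n * (auxA p m * (p ^ n * w) ^ m)) hS
  rw [div_mul_eq_mul_div, e1, div_eq_iff (aux_inf_ne p h0 h1), ← e3,
    ← tsum_mul_right]
  refine tsum_congr fun m => ?_
  have e2 : ∀ n, auxA p n * y ^ n * (auxA p m * (p ^ n * w) ^ m)
      = auxA p m * w ^ m * (auxA p n * (p ^ (k + m + 1)) ^ n) := by
    intro n
    have : p ^ (k + m + 1) = y * p ^ m := by
      rw [hy, show k + m + 1 = k + 1 + m by ring, zpow_add₀ h0.ne']; simp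
    rw [this, mul_pow, mul_pow, ← pow_mul, ← pow_mul, mul_comm n m]
    ring
  simp_rw [e2]
  rw [tsum_mul_left, aux_euler p h0 h1, aux_inf_z p h0 h1]
  ring

noncomputable def auxα (p s : ℝ) (n : ℤ) : ℝ := if 0 ≤ n then auxA p n.toNat * s ^ n else 0
noncomputable def auxβ (p s : ℝ) (n : ℤ) : ℝ := auxBZ p n * s ^ n

theorem auxα_neg (p s : ℝ) (n : ℤ) (hn : n ∉ Set.range ((↑) : ℕ → ℤ)) : auxα p s n = 0 := by
  have : ¬ 0 ≤ n := fun h => hn ⟨n.toNat, by simp [h]⟩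
  simp [auxα, this]

theorem auxβ_neg (p s : ℝ) (n : ℤ) (hn : n ∉ Set.range ((↑) : ℕ → ℤ)) : auxβ p s n = 0 := by
  have : ¬ 0 ≤ n := fun h => hn ⟨n.toNat, by simp [h]⟩
  simp [auxβ, auxBZ, this]

theorem auxα_nat (p s : ℝ) (n : ℕ) : auxα p s n = auxA p n * s ^ n := by simp [auxα]
theorem auxβ_nat (p s : ℝ) (n : ℕ) : auxβ p s n = auxB p n * s ^ n := by simp [auxβ, auxBZ]

theorem aux_tsum_nat (f : ℤ → ℝ) (hf : ∀ n, n ∉ Set.range ((↑) : ℕ → ℤ) → f n = 0) :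
    ∑' n, f n = ∑' n : ℕ, f n := by
  refine (Function.Injective.tsum_eq (g := ((↑) : ℕ → ℤ)) Nat.cast_injective ?_).symm
  intro n hn
  by_contra h
  exact hn (hf n h)

theorem aux_K (p s : ℝ) (h0 : 0 < p) (h1 : p < 1) (s0 : 0 < s) (s1 : s < 1) (K : ℤ → ℝ)
    (hK : ∀ k, K k = s ^ k * (qPochInf (s ^ 2) p / qPochInf p p *
      ∑' n : ℕ, auxA p n * (p ^ (k + 1)) ^ n / qPoch (s ^ 2) p n)) :
    Summable K ∧ ∀ t, ∑' k, K k * K (k + t) = if t = 0 then 1 else 0 := by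
  refine aux_orth (auxα p s) (auxβ p s) K ?_ ?_ ?_ ?_
  · refine (Function.Injective.summable_iff (g := ((↑) : ℕ → ℤ)) Nat.cast_injective
      (auxα_neg p s)).1 ?_
    simpa only [Function.comp_def, auxα_nat] using auxA_summable p h0 h1 s
  · refine (Function.Injective.summable_iff (g := ((↑) : ℕ → ℤ)) Nat.cast_injective
      (auxβ_neg p s)).1 ?_
    simpa only [Function.comp_def, auxβ_nat] using auxB_summable p h0 h1 s s0 s1
  · intro k
    rw [hK, aux_sym p (s ^ 2) h0 h1 (by positivity) (by nlinarith) k, aux_tsum_nat, ← tsum_mul_left]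
    · refine tsum_congr fun n => ?_
      rw [auxα_nat, auxβ, zpow_add₀ s0.ne', zpow_natCast]
      ring
    · intro n hn; rw [auxα_neg p s n hn, zero_mul]
  · intro u
    rw [aux_tsum_nat _ (fun n hn => by rw [auxα_neg p s n hn, zero_mul])]
    by_cases hu : 0 ≤ u
    · obtain ⟨N, rfl⟩ := Int.eq_ofNat_of_zero_le hu
      rw [tsum_eq_sum (s := Finset.range (N + 1))]
      · have h2 := aux_conv p h0 h1 N
        rw [Finset.Nat.sum_antidiagonal_eq_sum_range_succ_mk] at h2
        have h3 : ∀ n ∈ Finset.range (N + 1), auxα p s n * auxβ p s ((N : ℤ) - n)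
            = s ^ N * (auxA p n * auxB p (N - n)) := by
          intro n hn
          have hn' : n ≤ N := by simpa [Nat.lt_succ_iff] using hn
          rw [← Nat.cast_sub hn', auxα_nat, auxβ_nat, ← Nat.add_sub_cancel' hn', pow_add,
            Nat.add_sub_cancel' hn']
          ring
        rw [Finset.sum_congr rfl h3, ← Finset.mul_sum, h2]
        by_cases hN : N = 0
        · subst hN; simp
        · simp [hN]
      · intro n hn
        have : ¬ (0 : ℤ) ≤ (N : ℤ) - n := by simp at hn; omega
        rw [auxβ, auxBZ, if_neg this]; simp
    · have hu' : u ≠ 0 := by omega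
      simp only [hu', if_false]
      convert tsum_zero with n
      have : ¬ (0 : ℤ) ≤ u - n := by omega
      rw [auxβ, auxBZ, if_neg this]; simp

theorem aux_jvR (q v : ℝ) (hq0 : 0 < q) (m : ℤ) :
    jvR v q (q ^ m) = ∑' n : ℕ, auxA (q ^ 2) n * ((q ^ 2) ^ (m + 1)) ^ n /
      qPoch (q ^ (2 * v + 2 : ℝ)) (q ^ 2) n := by
  unfold jvR
  refine tsum_congr fun n => ?_
  have h1 : q ^ (n * (n + 1)) = (q ^ 2) ^ (n * (n - 1) / 2) * (q ^ 2) ^ n := by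
    rw [← pow_mul, ← pow_mul, ← pow_add, Nat.mul_div_cancel' (Nat.even_mul_pred_self n).two_dvd]
    congr 1
    cases n with
    | zero => rfl
    | succ n => simp; ring
  have h2 : ((q ^ 2) ^ (m + 1)) ^ n = (q ^ 2) ^ n * (q ^ m) ^ (2 * n) := by
    rw [zpow_add₀ (by positivity), zpow_one, mul_pow, pow_mul (q ^ m) 2 n, ← zpow_natCast q 2,
      ← zpow_mul, ← zpow_natCast (q ^ m) 2, ← zpow_mul, mul_comm m]
    ring
  rw [h1, h2, auxA]
  simp only [div_mul_eq_mul_div, div_div]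
  ring

theorem aux_weight (q v : ℝ) (hq0 : 0 < q) (m : ℤ) :
    q ^ m * (q ^ m) ^ (2 * v + 1 : ℝ) = ((q ^ (v + 1 : ℝ)) ^ m) ^ 2 := by
  rw [← Real.rpow_intCast, ← Real.rpow_intCast, ← Real.rpow_natCast, ← Real.rpow_mul hq0.le,
    ← Real.rpow_mul hq0.le, ← Real.rpow_mul hq0.le, ← Real.rpow_add hq0]
  congr 1
  push_cast
  ring

theorem aux_int0 (q v : ℝ) (hq0 : 0 < q) (n₀ : ℤ) (f : ℝ → ℝ) :
    qInt0 q (q ^ n₀) (fun t => f t * t ^ (2 * v + 1 : ℝ)) =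
      (1 - q) * ∑' n : ℤ, if n₀ ≤ n then ((q ^ (v + 1 : ℝ)) ^ n) ^ 2 * f (q ^ n) else 0 := by
  unfold qInt0
  rw [← (Equiv.addLeft n₀).tsum_eq, aux_tsum_nat, mul_assoc, ← tsum_mul_left]
  · congr 1
    refine tsum_congr fun n => ?_
    have : q ^ n₀ * q ^ n = q ^ (n₀ + n : ℤ) := by rw [zpow_add₀ hq0.ne']; simp
    simp only [this, Equiv.coe_addLeft, ← aux_weight q v hq0]
    rw [if_pos (by omega), ← mul_assoc, this]
    ring
  · intro n hn
    have : ¬ 0 ≤ n := fun h => hn ⟨n.toNat, by simp [h]⟩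
    simp [this]

theorem aux_intInf (q v : ℝ) (hq0 : 0 < q) (f : ℝ → ℝ) :
    qIntInf q (fun t => f t * t ^ (2 * v + 1 : ℝ)) =
      (1 - q) * ∑' n : ℤ, ((q ^ (v + 1 : ℝ)) ^ n) ^ 2 * f (q ^ n) := by
  unfold qIntInf
  congr 1
  refine tsum_congr fun n => ?_
  rw [← aux_weight q v hq0]
  ring

/-- discrete orthogonality of the eigenfunctions on `[0,a]_q`. -/
theorem eigenfunctions_discrete_orthogonality (q v : ℝ) (hq0 : 0 < q) (hq1 : q < 1)
    (hv : -1 < v) (n₀ : ℤ) (a : ℝ) (ha : a = (q : ℝ) ^ n₀)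
    (ψ : ℕ → ℝ → ℝ) (lam : ℕ → ℝ)
    (hmem : ∀ i, memL2 q v (ψ i))
    (heig : ∀ i, ∀ m : ℤ, Tav q v a (ψ i) ((q : ℝ) ^ m) = lam i * ψ i ((q : ℝ) ^ m))
    (horth : ∀ i j, qInner q v (ψ i) (ψ j) = if i = j then 1 else 0) :
    ∀ i j, qInt0 q a (fun x => ψ i x * ψ j x * x ^ (2 * v + 1 : ℝ)) =
      lam i * lam j * (if i = j then 1 else 0) := by
  subst ha
  set s := q ^ (v + 1 : ℝ) with hs
  have s0 : 0 < s := Real.rpow_pos_of_pos hq0 _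
  have s1 : s < 1 := Real.rpow_lt_one hq0.le hq1 (by linarith)
  have hw : q ^ (2 * v + 2 : ℝ) = s ^ 2 := by
    rw [hs, ← Real.rpow_natCast, ← Real.rpow_mul hq0.le]; congr 1; push_cast; ring
  set K : ℤ → ℝ := fun k => s ^ k * (qPochInf (s ^ 2) (q ^ 2) / qPochInf (q ^ 2) (q ^ 2) *
      ∑' n : ℕ, auxA (q ^ 2) n * ((q ^ 2) ^ (k + 1)) ^ n / qPoch (s ^ 2) (q ^ 2) n) with hKdef
  obtain ⟨hK, orth⟩ := aux_K (q ^ 2) s (by positivity) (by nlinarith) s0 s1 K (fun k => rfl)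
  set g : ℕ → ℤ → ℝ := fun i n => if n₀ ≤ n then s ^ n * ψ i (q ^ n) else 0 with hg
  have hKj : ∀ k, K k = s ^ k * (qPochInf (s ^ 2) (q ^ 2) / qPochInf (q ^ 2) (q ^ 2) *
      jvR v q (q ^ k)) := by
    intro k
    rw [aux_jvR q v hq0, hw]
  have hgs : ∀ i, Summable fun n => g i n ^ 2 := by
    intro i
    refine Summable.of_nonneg_of_le (fun n => sq_nonneg _) ?_ (hmem i)
    intro n
    have : q ^ n * ψ i (q ^ n) ^ 2 * (q ^ n) ^ (2 * v + 1 : ℝ) = (s ^ n * ψ i (q ^ n)) ^ 2 := by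
      rw [mul_pow, hs, ← aux_weight q v hq0]; ring
    rw [this]
    simp only [hg]
    split_ifs
    · exact le_rfl
    · simpa using sq_nonneg (s ^ n * ψ i (q ^ n))
  have hT : ∀ i m, ∑' n, K (m + n) * g i n = lam i * (s ^ m * ψ i (q ^ m)) := by
    intro i m
    have h1 := heig i m
    have h2 := aux_int0 q v hq0 n₀ (fun t => ψ i t * jvR v q (q ^ m * t))
    unfold Tav at h1
    rw [h2, cqv, hw, ← hs] at h1
    have hq : 1 - q ≠ 0 := by linarith
    have hX : ∀ A B X : ℝ, 1 / (1 - q) * A / B * ((1 - q) * X) = A / B * X := by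
      intro A B X
      field_simp
    rw [hX] at h1
    rw [mul_left_comm, ← h1, ← tsum_mul_left, ← tsum_mul_left]
    refine tsum_congr fun n => ?_
    rw [hKj, ← zpow_add₀ hq0.ne', zpow_add₀ s0.ne']
    simp only [hg]
    split_ifs
    · ring
    · simp
  intro i j
  have hp := aux_parseval K (g i) (g j) hK orth (hgs i) (hgs j)
  have h1 := aux_int0 q v hq0 n₀ (fun t => ψ i t * ψ j t)
  have h2 := aux_intInf q v hq0 (fun t => ψ i t * ψ j t)
  have h3 := horth i j
  unfold qInner at h3
  rw [← h3, h1, h2, ← hs]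
  have h4 : ∑' n : ℤ, (if n₀ ≤ n then (s ^ n) ^ 2 * (ψ i (q ^ n) * ψ j (q ^ n)) else 0)
      = ∑' n, g i n * g j n := by
    refine tsum_congr fun n => ?_
    simp only [hg]
    split_ifs
    · ring
    · simp
  rw [h4, ← hp]
  simp_rw [hT]
  rw [mul_left_comm (lam i * lam j), ← tsum_mul_left (a := lam i * lam j)]
  congr 1
  refine tsum_congr fun n => ?_
  ring
end

section
/- q-sampling theorem: for any f \in PW_{q,a}^v (extended analytically to \mathbb{C}), f(z) = (1-q)\sum_{k\in\mathbb{Z}} q^{2k(v+1)} f(q^k) k_z(q^k) for all z \in \mathbb{C}, where k_z(y) = c_{q,v}^2\int_0^a j_v(zt,q^2)j_v(yt,q^2)t^{2v+1}d_qt. -/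
/-- The kernel `k_z(y)` with complex `z`. -/
noncomputable def kkerC (q v a : ℝ) (z : ℂ) (y : ℝ) : ℂ :=
  ((cqv q v ^ 2 : ℝ) : ℂ) *
    qIntC0 q a (fun t => jv v q (z * t) * ((jvR v q (y * t) * t ^ (2 * v + 1 : ℝ) : ℝ) : ℂ))

/-- The analytic extension to ℂ of an element of `PW_{q,a}^v` with density `u ∈ L²_{q,v,a}`. -/
noncomputable def pwExt (q v a : ℝ) (u : ℝ → ℝ) (z : ℂ) : ℂ :=
  ((cqv q v : ℝ) : ℂ) *
    qIntC0 q a (fun t => ((u t * t ^ (2 * v + 1 : ℝ) : ℝ) : ℂ) * jv v q (z * t))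

namespace QS

noncomputable def eC (p : ℝ) (n : ℕ) : ℝ := (qPoch p p n)⁻¹

noncomputable def fC (p : ℝ) (n : ℕ) : ℝ := (-1) ^ n * p ^ (n.choose 2) * eC p n

noncomputable def FF (p T : ℝ) : ℝ := ∑' n : ℕ, fC p n * T ^ n

lemma one_sub_pow_pos {p : ℝ} (hp0 : 0 < p) (hp1 : p < 1) (n : ℕ) : 0 < 1 - p ^ (n + 1) := by
  have := pow_lt_one₀ hp0.le hp1 (Nat.succ_ne_zero n)
  simpa using this

lemma qPoch_succ (a p : ℝ) (n : ℕ) : qPoch a p (n + 1) = qPoch a p n * (1 - a * p ^ n) := by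
  simp [qPoch, Finset.prod_range_succ]

lemma qPoch_pos {a p : ℝ} (ha0 : 0 < a) (ha1 : a < 1) (hp0 : 0 < p) (hp1 : p < 1) (n : ℕ) :
    0 < qPoch a p n := by
  refine Finset.prod_pos fun i _ => ?_
  have : p ^ i ≤ 1 := pow_le_one₀ hp0.le hp1.le
  have : 0 < p ^ i := by positivity
  nlinarith

lemma eC_pos {p : ℝ} (hp0 : 0 < p) (hp1 : p < 1) (n : ℕ) : 0 < eC p n :=
  inv_pos.2 (qPoch_pos hp0 hp1 hp0 hp1 n)

lemma eC_succ {p : ℝ} (hp0 : 0 < p) (hp1 : p < 1) (n : ℕ) :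
    eC p (n + 1) * (1 - p ^ (n + 1)) = eC p n := by
  have h := qPoch_pos hp0 hp1 hp0 hp1 n
  have h1 := one_sub_pow_pos hp0 hp1 n
  unfold eC
  rw [qPoch_succ, ← pow_succ']
  field_simp

lemma fC_succ {p : ℝ} (hp0 : 0 < p) (hp1 : p < 1) (n : ℕ) :
    fC p (n + 1) * (1 - p ^ (n + 1)) = - p ^ n * fC p n := by
  unfold fC
  rw [mul_assoc, eC_succ hp0 hp1, Nat.choose_succ_succ' n 1, Nat.choose_one_right]
  ring

lemma eC_zero (p : ℝ) : eC p 0 = 1 := by simp [eC, qPoch]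
lemma fC_zero (p : ℝ) : fC p 0 = 1 := by simp [fC, eC_zero]

lemma fC_ne {p : ℝ} (hp0 : 0 < p) (hp1 : p < 1) (n : ℕ) : fC p n ≠ 0 := by
  have := (eC_pos hp0 hp1 n).ne'
  unfold fC
  simp [this, hp0.ne']

open PowerSeries in
lemma conv_nat {p : ℝ} (hp0 : 0 < p) (hp1 : p < 1) (N : ℕ) :
    ∑ ij ∈ Finset.HasAntidiagonal.antidiagonal N, eC p ij.1 * fC p ij.2 = if N = 0 then 1 else 0 := by
  have hE : (1 - X) * (PowerSeries.mk (eC p)) = rescale p (PowerSeries.mk (eC p)) := by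
    ext n
    rcases n with _ | n
    · simp [sub_mul]
    · have := eC_succ hp0 hp1 n
      simp [sub_mul, coeff_succ_X_mul, coeff_rescale]
      linarith
  have hF : (PowerSeries.mk (fC p)) = (1 - X) * rescale p (PowerSeries.mk (fC p)) := by
    ext n
    rcases n with _ | n
    · simp only [sub_mul, one_mul, map_sub, coeff_zero_X_mul, coeff_rescale, coeff_mk]; simp
    · have := fC_succ hp0 hp1 n
      simp [sub_mul, coeff_succ_X_mul, coeff_rescale]
      linarith
  have hP : (PowerSeries.mk (eC p)) * (PowerSeries.mk (fC p)) =
      rescale p ((PowerSeries.mk (eC p)) * (PowerSeries.mk (fC p))) := by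
    conv_lhs => rw [hF]
    rw [map_mul, ← hE]; ring
  have h := congrArg (coeff N) hP
  rw [coeff_rescale, coeff_mul] at h
  simp only [coeff_mk] at h
  rcases N with _ | N
  · simp [eC_zero, fC_zero]
  · have h1 := one_sub_pow_pos hp0 hp1 N
    simp only [Nat.succ_ne_zero, if_false]
    have : (1 - p ^ (N + 1)) * ∑ ij ∈ Finset.HasAntidiagonal.antidiagonal (N + 1), eC p ij.1 * fC p ij.2 = 0 := by
      linarith
    exact (mul_eq_zero.1 this).resolve_left h1.ne'

lemma tendsto_one_sub {p : ℝ} (hp0 : 0 < p) (hp1 : p < 1) :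
    Filter.Tendsto (fun n : ℕ => 1 - p ^ (n + 1)) Filter.atTop (nhds 1) := by
  have := ((tendsto_pow_atTop_nhds_zero_of_lt_one hp0.le hp1).comp
    (Filter.tendsto_add_atTop_nat 1)).const_sub 1
  simpa using this

lemma summable_e {p s : ℝ} (hp0 : 0 < p) (hp1 : p < 1) (hs0 : 0 < s) (hs1 : s < 1) :
    Summable (fun n => eC p n * s ^ n) := by
  refine summable_of_ratio_test_tendsto_lt_one hs1 ?_ ?_
  · exact Filter.Eventually.of_forall fun n => (mul_pos (eC_pos hp0 hp1 n) (pow_pos hs0 n)).ne'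
  · have h : Filter.Tendsto (fun n : ℕ => s / (1 - p ^ (n + 1))) Filter.atTop (nhds (s / 1)) :=
      tendsto_const_nhds.div (tendsto_one_sub hp0 hp1) one_ne_zero
    rw [div_one] at h
    refine h.congr fun n => ?_
    have h1 := one_sub_pow_pos hp0 hp1 n
    have h2 := eC_pos hp0 hp1 n
    have h3 := eC_pos hp0 hp1 (n + 1)
    rw [Real.norm_of_nonneg (by positivity), Real.norm_of_nonneg (by positivity),
      ← eC_succ hp0 hp1 n, pow_succ s]
    field_simp

lemma summable_f {p : ℝ} (hp0 : 0 < p) (hp1 : p < 1) (T : ℝ) :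
    Summable (fun n => ‖fC p n * T ^ n‖) := by
  by_cases hT : T = 0
  · subst hT
    refine summable_of_ne_finset_zero (s := {0}) fun n hn => ?_
    have : n ≠ 0 := by simpa using hn
    simp [this]
  have hT' : 0 < |T| := abs_pos.2 hT
  refine summable_of_ratio_test_tendsto_lt_one zero_lt_one ?_ ?_
  · exact Filter.Eventually.of_forall fun n =>
      norm_ne_zero_iff.2 (mul_ne_zero (fC_ne hp0 hp1 n) (pow_ne_zero _ hT))
  · have h : Filter.Tendsto (fun n : ℕ => p ^ n * |T| / (1 - p ^ (n + 1))) Filter.atTop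
        (nhds (0 * |T| / 1)) :=
      ((tendsto_pow_atTop_nhds_zero_of_lt_one hp0.le hp1).mul_const _).div
        (tendsto_one_sub hp0 hp1) one_ne_zero
    rw [zero_mul, zero_div] at h
    refine h.congr fun n => ?_
    have h1 := one_sub_pow_pos hp0 hp1 n
    have h2 := fC_ne hp0 hp1 n
    have h4 : |fC p (n + 1)| * (1 - p ^ (n + 1)) = p ^ n * |fC p n| := by
      have := congrArg abs (fC_succ hp0 hp1 n)
      rw [abs_mul, abs_mul, abs_neg, abs_of_pos h1, abs_of_pos (pow_pos hp0 n)] at this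
      exact this
    have h5 : 0 < |fC p n| := abs_pos.2 h2
    simp only [norm_mul, norm_pow, Real.norm_eq_abs, abs_abs]
    rw [div_eq_div_iff h1.ne' (by positivity), pow_succ]
    linear_combination (-(|T| ^ n * |T|)) * h4

lemma FF_rec {p : ℝ} (hp0 : 0 < p) (hp1 : p < 1) (T : ℝ) :
    FF p T = (1 - T) * FF p (p * T) := by
  have h1 := (summable_f hp0 hp1 T).of_norm
  have h2 := (summable_f hp0 hp1 (p * T)).of_norm
  have e1 : FF p T - FF p (p * T) = ∑' n, (1 - p ^ n) * (fC p n * T ^ n) := by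
    unfold FF
    rw [← h1.tsum_sub h2]
    congr 1; ext n; rw [mul_pow]; ring
  have e2 : ∑' n, (1 - p ^ n) * (fC p n * T ^ n) = - T * FF p (p * T) := by
    have hs : Summable (fun n => (1 - p ^ n) * (fC p n * T ^ n)) := by
      refine (h1.sub h2).congr fun n => ?_
      rw [mul_pow]; ring
    rw [hs.tsum_eq_zero_add]
    unfold FF
    rw [← tsum_mul_left]
    simp only [pow_zero, sub_self, zero_mul, zero_add]
    congr 1; ext n
    have := fC_succ hp0 hp1 n
    rw [mul_pow, pow_succ T]
    linear_combination (T ^ n * T) * this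
  linarith

lemma FF_iter {p : ℝ} (hp0 : 0 < p) (hp1 : p < 1) (T : ℝ) (n : ℕ) :
    FF p T = qPoch T p n * FF p (T * p ^ n) := by
  induction n with
  | zero => simp [qPoch]
  | succ n ih =>
    rw [ih, qPoch_succ, FF_rec hp0 hp1 (T * p ^ n), pow_succ]
    ring_nf

lemma FF_zero (p : ℝ) : FF p 0 = 1 := by
  unfold FF
  rw [tsum_eq_single 0]
  · simp [fC_zero]
  · intro n hn; simp [hn]

lemma FF_cont {p : ℝ} (hp0 : 0 < p) (hp1 : p < 1) :
    ContinuousOn (FF p) (Set.Icc (-1) 1) := by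
  refine continuousOn_tsum (u := fun n => ‖fC p n * 1 ^ n‖) (fun n => by fun_prop)
    (summable_f hp0 hp1 1) ?_
  intro n x hx
  simp only [norm_mul, norm_pow, Real.norm_eq_abs]
  have : |x| ≤ 1 := abs_le.2 hx
  have h2 : |x| ^ n ≤ |(1 : ℝ)| ^ n := pow_le_pow_left₀ (abs_nonneg x) (by simpa using this) n
  exact mul_le_mul_of_nonneg_left h2 (abs_nonneg _)

lemma FF_eq {p : ℝ} (hp0 : 0 < p) (hp1 : p < 1) (T : ℝ) : qPochInf T p = FF p T := by
  have hm : Multipliable (fun i : ℕ => 1 - T * p ^ i) := by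
    have : Summable (fun i : ℕ => ‖-(T * p ^ i)‖) := by
      have := (summable_geometric_of_lt_one hp0.le hp1).mul_left T
      exact this.neg.norm
    simpa [sub_eq_add_neg] using multipliable_one_add_of_summable this
  have h1 := hm.hasProd.tendsto_prod_nat
  have h0 : Filter.Tendsto (fun n : ℕ => T * p ^ n) Filter.atTop (nhds 0) := by
    simpa using (tendsto_pow_atTop_nhds_zero_of_lt_one hp0.le hp1).const_mul T
  have hc : ContinuousAt (FF p) 0 :=
    (FF_cont hp0 hp1).continuousAt (Icc_mem_nhds (by norm_num) (by norm_num))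
  have h2 := hc.tendsto.comp h0
  have h3 := h1.mul h2
  rw [FF_zero, mul_one] at h3
  refine tendsto_nhds_unique h3 ?_
  refine tendsto_const_nhds.congr fun n => ?_
  exact FF_iter hp0 hp1 T n

lemma FF_ne {p s : ℝ} (hp0 : 0 < p) (hp1 : p < 1) (hs0 : 0 < s) (hs1 : s < 1) : FF p s ≠ 0 := by
  have he := summable_e hp0 hp1 hs0 hs1
  have hf := summable_f hp0 hp1 s
  have h := tsum_mul_tsum_eq_tsum_sum_antidiagonal_of_summable_norm he.norm hf
  have h2 : ∀ N : ℕ, ∑ ij ∈ Finset.HasAntidiagonal.antidiagonal N, (eC p ij.1 * s ^ ij.1) * (fC p ij.2 * s ^ ij.2)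
      = if N = 0 then 1 else 0 := by
    intro N
    have : ∑ ij ∈ Finset.HasAntidiagonal.antidiagonal N, (eC p ij.1 * s ^ ij.1) * (fC p ij.2 * s ^ ij.2)
       = s ^ N * ∑ ij ∈ Finset.HasAntidiagonal.antidiagonal N, eC p ij.1 * fC p ij.2 := by
      rw [Finset.mul_sum]
      refine Finset.sum_congr rfl fun ij hij => ?_
      rw [← Finset.HasAntidiagonal.mem_antidiagonal.1 hij, pow_add]; ring
    rw [this, conv_nat hp0 hp1]
    split_ifs with h
    · simp [h]
    · simp
  simp only [h2, tsum_ite_eq] at h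
  intro h0
  have h0' : ∑' n, fC p n * s ^ n = 0 := h0
  rw [h0', mul_zero] at h
  exact zero_ne_one h

/-- zero extension to the integers -/
noncomputable def ext (g : ℕ → ℝ) (i : ℤ) : ℝ := if 0 ≤ i then g i.toNat else 0

lemma ext_nat (g : ℕ → ℝ) (n : ℕ) : ext g n = g n := by simp [ext]

lemma ext_neg (g : ℕ → ℝ) {i : ℤ} (h : i < 0) : ext g i = 0 := by simp [ext, h]

lemma ext_supp (g : ℕ → ℝ) {i : ℤ} (h : i ∉ Set.range ((↑) : ℕ → ℤ)) : ext g i = 0 := by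
  apply ext_neg
  by_contra h'
  exact h ⟨i.toNat, by simp; omega⟩

lemma ext_summable {g : ℕ → ℝ} (hg : Summable fun n => ‖g n‖) : Summable fun i => ‖ext g i‖ := by
  rw [← Function.Injective.summable_iff (Nat.cast_injective (R := ℤ))]
  · simpa [Function.comp_def, ext_nat] using hg
  · intro i hi; rw [ext_supp g hi, norm_zero]

lemma FF_pow {p : ℝ} (hp0 : 0 < p) (hp1 : p < 1) (k : ℤ) :
    FF p (p ^ (k + 1)) = FF p p * ext (eC p) k := by
  rcases le_or_gt 0 k with h | h
  · lift k to ℕ using h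
    rw [ext_nat, FF_iter hp0 hp1 p k, eC]
    have := qPoch_pos hp0 hp1 hp0 hp1 k
    have e : p ^ ((k : ℤ) + 1) = p * p ^ k := by
      rw [zpow_add₀ hp0.ne', zpow_natCast, zpow_one, mul_comm]
    rw [e]; field_simp
  · rw [ext_neg _ h, mul_zero]
    obtain ⟨n, rfl⟩ : ∃ n : ℕ, k = -(n : ℤ) - 1 := ⟨(-k - 1).toNat, by omega⟩
    rw [FF_iter hp0 hp1 _ (n + 1), qPoch_succ, sub_add_cancel, zpow_neg, zpow_natCast,
      inv_mul_cancel₀ (by positivity)]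
    simp

lemma conv_int {p s : ℝ} (hp0 : 0 < p) (hp1 : p < 1) (N : ℤ) :
    ∑' i : ℤ, ext (fun n => eC p n * s ^ n) (N - i) * ext (fun n => fC p n * s ^ n) i
      = if N = 0 then 1 else 0 := by
  rw [← Function.Injective.tsum_eq (Nat.cast_injective (R := ℤ))]
  swap
  · intro i hi
    by_contra h
    exact hi (by simp [ext_supp _ h])
  rcases lt_or_ge N 0 with h | h
  · rw [if_neg h.ne]
    convert tsum_zero with i
    rw [ext_neg _ (by omega), zero_mul]
  · lift N to ℕ using h
    rw [tsum_eq_sum (s := Finset.range (N + 1))]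
    · have h := conv_nat hp0 hp1 N
      rw [← Finset.Nat.sum_antidiagonal_swap, Finset.Nat.sum_antidiagonal_eq_sum_range_succ_mk] at h
      have e : ∀ i ∈ Finset.range (N + 1), ext (fun n => eC p n * s ^ n) ((N : ℤ) - i) *
          ext (fun n => fC p n * s ^ n) i = s ^ N * (eC p (N - i) * fC p i) := by
        intro i hi
        have hi' : i ≤ N := by simpa [Nat.lt_succ_iff] using hi
        rw [← Nat.cast_sub hi', ext_nat, ext_nat]
        nth_rw 3 [← Nat.sub_add_cancel hi']
        rw [pow_add]; ring
      rw [Finset.sum_congr rfl e, ← Finset.mul_sum]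
      simp only [Prod.fst_swap, Prod.snd_swap, Prod.swap_prod_mk] at h
      rw [h]
      by_cases hN : N = 0 <;> simp [hN]
    · intro i hi
      have : N + 1 ≤ i := by simpa using hi
      rw [ext_neg _ (by omega), zero_mul]

end QS

namespace QS

lemma summable_triple {x y z : ℤ → ℝ} (hx : Summable fun i => ‖x i‖) (hy : Summable fun i => ‖y i‖)
    (hz : Summable fun i => ‖z i‖) :
    Summable fun t : ℤ × ℤ × ℤ => ‖x t.1‖ * (‖y t.2.1‖ * ‖z t.2.2‖) := by
  have h1 : Summable fun t : ℤ × ℤ => ‖y t.1‖ * ‖z t.2‖ :=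
    hy.mul_of_nonneg hz (fun _ => norm_nonneg _) (fun _ => norm_nonneg _)
  exact hx.mul_of_nonneg h1 (fun _ => norm_nonneg _) (fun _ => by positivity)

lemma bdd_of_summable {ι : Type*} {x : ι → ℝ} (hx : Summable fun i => ‖x i‖) :
    ∃ M, 0 ≤ M ∧ ∀ i, ‖x i‖ ≤ M :=
  ⟨∑' i, ‖x i‖, tsum_nonneg fun _ => norm_nonneg _,
    fun i => hx.le_tsum i fun _ _ => norm_nonneg _⟩

/-- (k,i) ↦ (i+k, i) -/
def eqv2 : ℤ × ℤ ≃ ℤ × ℤ where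
  toFun t := (t.2 + t.1, t.2)
  invFun t := (t.1 - t.2, t.2)
  left_inv t := by ext <;> simp
  right_inv t := by ext <;> simp

def eqvA (n : ℤ) : ℤ × ℤ × ℤ ≃ ℤ × ℤ × ℤ where
  toFun t := (t.2.1 + (t.1 + n), t.2.1, t.2.2)
  invFun t := (t.1 - t.2.1 - n, t.2.1, t.2.2)
  left_inv t := by ext <;> simp
  right_inv t := by ext <;> simp

/-- (N,i,j) ↦ (k,i,j) with k = N - i - j - m -/
def eqvB (m : ℤ) : ℤ × ℤ × ℤ ≃ ℤ × ℤ × ℤ where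
  toFun t := (t.1 - t.2.1 - t.2.2 - m, t.2.1, t.2.2)
  invFun t := (t.1 + t.2.1 + t.2.2 + m, t.2.1, t.2.2)
  left_inv t := by ext <;> simp <;> ring
  right_inv t := by ext <;> simp <;> ring

lemma summable_a {x y : ℤ → ℝ} (hx : Summable fun i => ‖x i‖) (hy : Summable fun i => ‖y i‖) :
    Summable fun k : ℤ => ‖∑' i, x (i + k) * y i‖ := by
  have h1 : Summable fun t : ℤ × ℤ => ‖x t.1‖ * ‖y t.2‖ :=
    hx.mul_of_nonneg hy (fun _ => norm_nonneg _) (fun _ => norm_nonneg _)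
  have h2 : Summable fun t : ℤ × ℤ => ‖x (t.2 + t.1) * y t.2‖ := by
    have := eqv2.summable_iff.2 h1
    refine this.congr fun t => ?_
    simp [eqv2]
  refine Summable.of_nonneg_of_le (fun _ => norm_nonneg _) (fun k => ?_) h2.prod
  exact norm_tsum_le_tsum_norm (h2.prod_factor k)

lemma orth {x y : ℤ → ℝ} (hx : Summable fun i => ‖x i‖) (hy : Summable fun i => ‖y i‖)
    (hc : ∀ N, ∑' i, x (N - i) * y i = if N = 0 then 1 else 0) (n m : ℤ) :
    ∑' k, (∑' i, x (i + (k + n)) * y i) * (∑' i, x (i + (k + m)) * y i) =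
      if n = m then 1 else 0 := by
  obtain ⟨M, hM0, hM⟩ := bdd_of_summable hx
  obtain ⟨M', hM0', hM'⟩ := bdd_of_summable hy
  have hxy : ∀ k, Summable fun i => ‖x (i + k) * y i‖ := fun k => by
    refine Summable.of_nonneg_of_le (fun _ => norm_nonneg _) (fun i => ?_) (hy.mul_left M)
    rw [norm_mul]
    exact mul_le_mul_of_nonneg_right (hM _) (norm_nonneg _)
  have hxy' : ∀ k, Summable fun i => ‖x (k - i) * y i‖ := fun k => by
    refine Summable.of_nonneg_of_le (fun _ => norm_nonneg _) (fun i => ?_) (hy.mul_left M)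
    rw [norm_mul]
    exact mul_le_mul_of_nonneg_right (hM _) (norm_nonneg _)
  let G : ℤ × ℤ × ℤ → ℝ := fun t =>
    (x (t.2.1 + (t.1 + n)) * y t.2.1) * (x (t.2.2 + (t.1 + m)) * y t.2.2)
  have hG : Summable G := by
    have h := ((eqvA n).summable_iff.2 (summable_triple hx hy hy)).mul_left M
    refine Summable.of_norm_bounded h fun t => ?_
    simp only [G, eqvA, norm_mul, Function.comp, Equiv.coe_fn_mk]
    have := mul_le_mul_of_nonneg_left (hM (t.2.2 + (t.1 + m)))
      (show 0 ≤ ‖x (t.2.1 + (t.1 + n))‖ * ‖y t.2.1‖ * ‖y t.2.2‖ by positivity)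
    linarith
  have hG' : Summable (G ∘ eqvB m) := (eqvB m).summable_iff.2 hG
  have e1 : ∑' k, (∑' i, x (i + (k + n)) * y i) * (∑' i, x (i + (k + m)) * y i) = ∑' t, G t := by
    rw [hG.tsum_prod]
    congr 1; ext k
    rw [tsum_mul_tsum_of_summable_norm (hxy _) (hxy _)]
  have e2 : ∑' t, (G ∘ eqvB m) t = ∑' N : ℤ,
      (∑' j, x (N + (n - m) - j) * y j) * (∑' i, x (N - i) * y i) := by
    rw [hG'.tsum_prod]
    congr 1; ext N
    rw [mul_comm, tsum_mul_tsum_of_summable_norm (hxy' _) (hxy' _)]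
    congr 1; ext t
    simp only [G, eqvB, Function.comp, Equiv.coe_fn_mk]
    rw [show t.1 + (N - t.1 - t.2 - m + n) = N + (n - m) - t.2 by ring,
      show t.2 + (N - t.1 - t.2 - m + m) = N - t.1 by ring]
    ring
  rw [e1, ← (eqvB m).tsum_eq G]
  change ∑' t, (G ∘ eqvB m) t = _
  rw [e2]
  simp only [hc]
  rw [tsum_eq_single 0]
  · simp [sub_eq_zero]
  · intro N hN; simp [hN]

lemma sampling {a : ℤ → ℝ} (ha : Summable fun k => ‖a k‖)
    (ho : ∀ n m : ℤ, ∑' k, a (k + n) * a (k + m) = if n = m then 1 else 0)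
    (n₀ : ℤ) {U : ℕ → ℝ} {M : ℝ} (hU : ∀ n, ‖U n‖ ≤ M) {Z : ℕ → ℂ} (hZ : Summable fun n => ‖Z n‖) :
    ∑' k : ℤ, (∑' n : ℕ, ((U n * a (k + (n₀ + n)) : ℝ) : ℂ)) *
        (∑' m : ℕ, Z m * (a (k + (n₀ + m)) : ℂ)) = ∑' n, (U n : ℂ) * Z n := by
  have hM0 : 0 ≤ M := (norm_nonneg _).trans (hU 0)
  obtain ⟨A, hA0, hA⟩ := bdd_of_summable ha
  have hinj : ∀ k : ℤ, Function.Injective fun n : ℕ => k + (n₀ + n) := fun k i j h => by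
    simpa using h
  have hak : ∀ k : ℤ, Summable fun n : ℕ => ‖a (k + (n₀ + n))‖ := fun k =>
    ha.comp_injective (hinj k)
  have hUa : ∀ k : ℤ, Summable fun n : ℕ => ‖((U n * a (k + (n₀ + n)) : ℝ) : ℂ)‖ := fun k => by
    refine Summable.of_nonneg_of_le (fun _ => norm_nonneg _) (fun i => ?_) ((hak k).mul_left M)
    rw [Complex.norm_real, norm_mul]
    exact mul_le_mul_of_nonneg_right (hU _) (norm_nonneg _)
  have hZa : ∀ k : ℤ, Summable fun n : ℕ => ‖Z n * (a (k + (n₀ + n)) : ℂ)‖ := fun k => by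
    refine Summable.of_nonneg_of_le (fun _ => norm_nonneg _) (fun i => ?_) (hZ.mul_right A)
    rw [norm_mul, Complex.norm_real]
    exact mul_le_mul_of_nonneg_left (hA _) (norm_nonneg _)
  let G : ℤ × ℕ × ℕ → ℂ := fun t =>
    ((U t.2.1 * a (t.1 + (n₀ + t.2.1)) : ℝ) : ℂ) * (Z t.2.2 * (a (t.1 + (n₀ + t.2.2)) : ℂ))
  have hG : Summable G := by
    -- dominated by M * |Z m| |a (k+n₀+m)| |a (k+n₀+n)|
    have h1 : Summable fun t : ℕ × ℤ × ℤ => ‖Z t.1‖ * (‖a t.2.1‖ * ‖a t.2.2‖) :=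
      hZ.mul_of_nonneg (ha.mul_of_nonneg ha (fun _ => norm_nonneg _) (fun _ => norm_nonneg _))
        (fun _ => norm_nonneg _) (fun _ => by positivity)
    let φ : ℤ × ℕ × ℕ → ℕ × ℤ × ℤ := fun t =>
      (t.2.2, t.1 + (n₀ + t.2.1), t.1 + (n₀ + t.2.2))
    have hφ : Function.Injective φ := by
      rintro ⟨k, n, m⟩ ⟨k', n', m'⟩ h
      simp only [φ, Prod.mk.injEq] at h ⊢
      omega
    have h2 := (h1.comp_injective hφ).mul_left M
    refine Summable.of_norm_bounded h2 fun t => ?_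
    simp only [G, φ, norm_mul, Function.comp, Complex.norm_real]
    have := mul_le_mul_of_nonneg_right (hU t.2.1)
      (show 0 ≤ ‖Z t.2.2‖ * (‖a (t.1 + (n₀ + t.2.1))‖ * ‖a (t.1 + (n₀ + t.2.2))‖) by positivity)
    linarith
  have e1 : ∑' k : ℤ, (∑' n : ℕ, ((U n * a (k + (n₀ + n)) : ℝ) : ℂ)) *
        (∑' m : ℕ, Z m * (a (k + (n₀ + m)) : ℂ)) = ∑' t, G t := by
    rw [hG.tsum_prod]
    congr 1; ext k : 1
    rw [tsum_mul_tsum_of_summable_norm (hUa _) (hZa _)]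
  rw [e1, ← (Equiv.prodComm (ℕ × ℕ) ℤ).tsum_eq G]
  have hG2 : Summable (G ∘ Equiv.prodComm (ℕ × ℕ) ℤ) := (Equiv.prodComm (ℕ × ℕ) ℤ).summable_iff.2 hG
  have hG3 := hG2.prod
  change ∑' t, (G ∘ Equiv.prodComm (ℕ × ℕ) ℤ) t = _
  rw [hG2.tsum_prod]
  have e3 : ∀ nm : ℕ × ℕ, ∑' k : ℤ, (G ∘ Equiv.prodComm (ℕ × ℕ) ℤ) (nm, k) =
      (U nm.1 : ℂ) * Z nm.2 * (if nm.1 = nm.2 then 1 else 0) := by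
    intro nm
    have h := ho (n₀ + nm.1) (n₀ + nm.2)
    have h' : ∑' k : ℤ, ((a (k + (n₀ + nm.1)) * a (k + (n₀ + nm.2)) : ℝ) : ℂ) =
        if nm.1 = nm.2 then 1 else 0 := by
      rw [← Complex.ofReal_tsum, h]
      by_cases hh : nm.1 = nm.2 <;> simp [hh]
    rw [← h', ← tsum_mul_left]
    congr 1; ext k : 1
    simp only [G, Function.comp, Equiv.prodComm_apply, Prod.swap_prod_mk]
    push_cast; ring
  simp only [e3] at hG3 ⊢
  rw [hG3.tsum_prod]
  congr 1; ext n : 1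
  rw [tsum_eq_single n]
  · simp
  · intro m hm; simp [hm.symm]

end QS

namespace QS

lemma q_pow_choose (q : ℝ) (n : ℕ) : q ^ (n * (n + 1)) = (q ^ 2) ^ (n.choose 2) * (q ^ 2) ^ n := by
  rw [← pow_add, ← pow_mul]
  congr 1
  induction n with
  | zero => rfl
  | succ n ih =>
    rw [Nat.choose_succ_succ' n 1, Nat.choose_one_right]
    linarith

lemma jterm (q b w : ℝ) (n : ℕ) :
    (-1 : ℝ) ^ n * q ^ (n * (n + 1)) * w ^ (2 * n) / (qPoch (q ^ 2) (q ^ 2) n * qPoch b (q ^ 2) n)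
      = fC (q ^ 2) n * (q ^ 2 * w ^ 2) ^ n / qPoch b (q ^ 2) n := by
  rw [q_pow_choose, fC, eC, mul_pow, pow_mul w]
  simp only [div_eq_mul_inv, mul_inv]
  ring

lemma summable_j {p b : ℝ} (hp0 : 0 < p) (hp1 : p < 1) (hb0 : 0 < b) (hb1 : b < 1) (w : ℝ) :
    Summable fun n => ‖fC p n * w ^ n / qPoch b p n‖ := by
  obtain ⟨K, hK0, hK⟩ := bdd_of_summable (summable_f hp0 hp1 b)
  have hbne : 0 < |FF p b| := abs_pos.2 (FF_ne hp0 hp1 hb0 hb1)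
  -- 1 / qPoch b p n = FF (b p^n) / FF b
  have hB : ∀ n, |FF p (b * p ^ n)| ≤ ∑' m, ‖fC p m * b ^ m‖ := by
    intro n
    have hs := summable_f hp0 hp1 (b * p ^ n)
    refine (norm_tsum_le_tsum_norm hs).trans ?_
    refine hs.tsum_le_tsum (fun m => ?_) (summable_f hp0 hp1 b)
    rw [norm_mul, norm_mul, norm_pow, norm_pow]
    have h1 : b * p ^ n ≤ b := mul_le_of_le_one_right hb0.le (pow_le_one₀ hp0.le hp1.le)
    have h0 : 0 < b * p ^ n := by positivity
    rw [Real.norm_of_nonneg h0.le, Real.norm_of_nonneg hb0.le]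
    gcongr
  refine Summable.of_nonneg_of_le (fun _ => norm_nonneg _) (fun n => ?_)
    ((summable_f hp0 hp1 w).mul_right ((∑' m, ‖fC p m * b ^ m‖) / |FF p b|))
  have hq := qPoch_pos hb0 hb1 hp0 hp1 n
  have : fC p n * w ^ n / qPoch b p n = fC p n * w ^ n * (FF p (b * p ^ n) / FF p b) := by
    rw [FF_iter hp0 hp1 b n]
    have : FF p (b * p ^ n) ≠ 0 := by
      intro h
      have := FF_iter hp0 hp1 b n
      rw [h, mul_zero] at this
      exact FF_ne hp0 hp1 hb0 hb1 this
    field_simp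
  rw [this, norm_mul, norm_div, Real.norm_eq_abs (FF p (b * p ^ n)), Real.norm_eq_abs (FF p b)]
  have := hB n
  gcongr

lemma J_rel {p b : ℝ} (hp0 : 0 < p) (hp1 : p < 1) (hb0 : 0 < b) (hb1 : b < 1) (k : ℤ) :
    FF p b * ∑' n, fC p n * (p ^ (k + 1)) ^ n / qPoch b p n =
      FF p p * ∑' m : ℕ, fC p m * b ^ m * ext (eC p) (m + k) := by
  set w := p ^ (k + 1) with hw
  have hF : Summable fun t : ℕ × ℕ => (fC p t.1 * w ^ t.1) * (fC p t.2 * (b * p ^ t.1) ^ t.2) := by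
    have h := (summable_f hp0 hp1 w).mul_of_nonneg (summable_f hp0 hp1 b)
      (fun _ => norm_nonneg _) (fun _ => norm_nonneg _)
    refine Summable.of_norm_bounded h fun t => ?_
    rw [norm_mul]
    refine mul_le_mul_of_nonneg_left ?_ (norm_nonneg _)
    rw [norm_mul, norm_mul, norm_pow, norm_pow]
    have h1 : b * p ^ t.1 ≤ b := mul_le_of_le_one_right hb0.le (pow_le_one₀ hp0.le hp1.le)
    have h0 : 0 < b * p ^ t.1 := by positivity
    rw [Real.norm_of_nonneg h0.le, Real.norm_of_nonneg hb0.le]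
    gcongr
  have e1 : FF p b * ∑' n, fC p n * w ^ n / qPoch b p n =
      ∑' n, ∑' m, (fC p n * w ^ n) * (fC p m * (b * p ^ n) ^ m) := by
    rw [← tsum_mul_left]
    congr 1; ext n
    rw [tsum_mul_left]
    change _ = _ * FF p (b * p ^ n)
    have hq := qPoch_pos hb0 hb1 hp0 hp1 n
    rw [FF_iter hp0 hp1 b n]
    field_simp
  have e2 : FF p p * ∑' m : ℕ, fC p m * b ^ m * ext (eC p) (m + k) =
      ∑' m, ∑' n, (fC p n * w ^ n) * (fC p m * (b * p ^ n) ^ m) := by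
    rw [← tsum_mul_left]
    congr 1; ext m
    have h := FF_pow hp0 hp1 (m + k)
    rw [show FF p p * (fC p m * b ^ m * ext (eC p) (m + k)) =
      (fC p m * b ^ m) * (FF p p * ext (eC p) (m + k)) by ring, ← h, FF, ← tsum_mul_left]
    congr 1; ext n
    have : p ^ ((m : ℤ) + k + 1) = w * p ^ m := by
      rw [hw, add_assoc, zpow_add₀ hp0.ne', zpow_natCast, mul_comm]
    rw [this, mul_pow, mul_pow, ← pow_mul, ← pow_mul]; ring
  rw [e1, e2]
  exact (Summable.tsum_comm (f := fun n m => (fC p n * w ^ n) * (fC p m * (b * p ^ n) ^ m)) hF).symm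

/-- a_k = s^k C j(q^k) as a bilateral convolution. -/
lemma a_rel {p s : ℝ} (hp0 : 0 < p) (hp1 : p < 1) (hs0 : 0 < s) (hs1 : s < 1) (k : ℤ) :
    s ^ k * (FF p (s ^ 2) / FF p p * ∑' n, fC p n * (p ^ (k + 1)) ^ n / qPoch (s ^ 2) p n) =
      ∑' i : ℤ, ext (fun n => eC p n * s ^ n) (i + k) * ext (fun n => fC p n * s ^ n) i := by
  have hb1 : s ^ 2 < 1 := pow_lt_one₀ hs0.le hs1 two_ne_zero
  have h := J_rel hp0 hp1 (by positivity : 0 < s ^ 2) hb1 k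
  have hne := FF_ne hp0 hp1 hp0 hp1
  rw [div_mul_eq_mul_div, h, mul_div_cancel_left₀ _ hne, ← tsum_mul_left,
    ← Function.Injective.tsum_eq (Nat.cast_injective (R := ℤ))]
  · congr 1; ext m
    rw [ext_nat]
    rcases lt_or_ge ((m : ℤ) + k) 0 with h' | h'
    · simp [ext_neg _ h']
    · obtain ⟨l, hl⟩ := Int.eq_ofNat_of_zero_le h'
      rw [hl, ext_nat, ext_nat]
      have hk : k = (l : ℤ) - m := by omega
      rw [hk, zpow_sub₀ hs0.ne', zpow_natCast, zpow_natCast]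
      field_simp
      ring
  · intro i hi
    by_contra h
    exact hi (by simp [ext_supp _ h])

lemma jv_real (v q x : ℝ) : jv v q (x : ℂ) = (jvR v q x : ℂ) := by
  unfold jv jvR
  rw [Complex.ofReal_tsum]
  congr 1; ext n : 1
  push_cast
  rfl

lemma jv_bdd {q v : ℝ} (hq0 : 0 < q) (hq1 : q < 1) (hv : -1 < v) (R : ℝ) :
    ∃ M, 0 ≤ M ∧ ∀ z : ℂ, ‖z‖ ≤ R → ‖jv v q z‖ ≤ M := by
  have hp0 : 0 < q ^ 2 := by positivity
  have hp1 : q ^ 2 < 1 := pow_lt_one₀ hq0.le hq1 two_ne_zero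
  have hb0 : 0 < q ^ (2 * v + 2 : ℝ) := Real.rpow_pos_of_pos hq0 _
  have hb1 : q ^ (2 * v + 2 : ℝ) < 1 := Real.rpow_lt_one hq0.le hq1 (by linarith)
  have hs := summable_j hp0 hp1 hb0 hb1 (q ^ 2 * R ^ 2)
  refine ⟨∑' n, ‖fC (q ^ 2) n * (q ^ 2 * R ^ 2) ^ n / qPoch (q ^ (2 * v + 2 : ℝ)) (q ^ 2) n‖,
    tsum_nonneg fun n => norm_nonneg _, fun z hz => ?_⟩
  have hle : ∀ n : ℕ, ‖(-1 : ℂ) ^ n * (q : ℂ) ^ (n * (n + 1)) * z ^ (2 * n) /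
    ((qPoch (q ^ 2) (q ^ 2) n : ℝ) * (qPoch (q ^ (2 * v + 2 : ℝ)) (q ^ 2) n : ℝ) : ℝ)‖ ≤
    ‖fC (q ^ 2) n * (q ^ 2 * R ^ 2) ^ n / qPoch (q ^ (2 * v + 2 : ℝ)) (q ^ 2) n‖ := by
    intro n
    rw [← jterm]
    have h1 := qPoch_pos hp0 hp1 hp0 hp1 n
    have h2 := qPoch_pos hb0 hb1 hp0 hp1 n
    have hR : 0 ≤ R := (norm_nonneg z).trans hz
    simp only [norm_div, norm_mul, norm_pow, norm_neg, norm_one, one_pow, Complex.norm_real,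
      Real.norm_of_nonneg hR]
    gcongr
  have hs' := Summable.of_nonneg_of_le (fun _ => norm_nonneg _) hle hs
  exact (norm_tsum_le_tsum_norm hs').trans (hs'.tsum_le_tsum hle hs)

end QS

/-- the q-sampling theorem: for `f ∈ PW_{q,a}^v`,
`f(z) = (1-q) ∑_{k∈ℤ} q^{2k(v+1)} f(qᵏ) k_z(qᵏ)` for all `z ∈ ℂ`. -/
theorem q_sampling_theorem (q v : ℝ) (hq0 : 0 < q) (hq1 : q < 1) (hv : -1 < v)
    (n₀ : ℤ) (a : ℝ) (ha : a = (q : ℝ) ^ n₀)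
    (u : ℝ → ℝ) (hu : memL2a q v a u) :
    ∀ z : ℂ, pwExt q v a u z =
      ((1 - q : ℝ) : ℂ) * ∑' k : ℤ,
        ((q ^ (2 * (k : ℝ) * (v + 1)) : ℝ) : ℂ) *
          pwExt q v a u (((q : ℝ) ^ k : ℝ) : ℂ) * kkerC q v a z ((q : ℝ) ^ k) := by
  have hp0 : 0 < q ^ 2 := by positivity
  have hp1 : q ^ 2 < 1 := pow_lt_one₀ hq0.le hq1 two_ne_zero
  obtain ⟨s, hs⟩ : ∃ s : ℝ, s = q ^ (v + 1 : ℝ) := ⟨_, rfl⟩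
  have hs0 : 0 < s := hs ▸ Real.rpow_pos_of_pos hq0 _
  have hs1 : s < 1 := hs ▸ Real.rpow_lt_one hq0.le hq1 (by linarith)
  have hb : q ^ (2 * v + 2 : ℝ) = s ^ 2 := by
    rw [hs, ← Real.rpow_natCast, ← Real.rpow_mul hq0.le]; congr 1; push_cast; ring
  have hsk : ∀ k : ℤ, s ^ k = q ^ ((v + 1) * k : ℝ) := fun k => by
    rw [hs, ← Real.rpow_intCast, ← Real.rpow_mul hq0.le]
  have ha0 : 0 < a := ha ▸ zpow_pos hq0 _
  obtain ⟨C, hC⟩ : ∃ C : ℝ, C = QS.FF (q ^ 2) (s ^ 2) / QS.FF (q ^ 2) (q ^ 2) := ⟨_, rfl⟩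
  have hcC : cqv q v * (1 - q) = C := by
    have : 1 - q ≠ 0 := by linarith
    rw [hC, cqv, hb, QS.FF_eq hp0 hp1, QS.FF_eq hp0 hp1]
    field_simp
  obtain ⟨α, hα⟩ : ∃ α : ℤ → ℝ, ∀ k, α k = s ^ k * (C * jvR v q (q ^ k)) := ⟨_, fun _ => rfl⟩
  have hα' : α = fun k : ℤ => ∑' i : ℤ, QS.ext (fun n => QS.eC (q ^ 2) n * s ^ n) (i + k) *
      QS.ext (fun n => QS.fC (q ^ 2) n * s ^ n) i := by
    ext k
    rw [hα, ← QS.a_rel hp0 hp1 hs0 hs1 k, hC, jvR]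
    congr 2
    apply tsum_congr
    intro n
    rw [QS.jterm, hb]
    congr 3
    rw [zpow_add₀ hp0.ne', zpow_one, mul_comm, ← zpow_natCast, ← zpow_natCast, ← zpow_mul,
      ← zpow_mul, mul_comm k]
  have hx := QS.ext_summable (QS.summable_e hp0 hp1 hs0 hs1).norm
  have hy := QS.ext_summable (QS.summable_f hp0 hp1 s)
  have hsum : Summable fun k => ‖α k‖ := by
    rw [hα']; exact QS.summable_a hx hy
  have ho : ∀ n m : ℤ, ∑' k, α (k + n) * α (k + m) = if n = m then 1 else 0 := by
    rw [hα']; exact QS.orth hx hy (QS.conv_int hp0 hp1)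
  obtain ⟨U, hU⟩ : ∃ U : ℕ → ℝ, ∀ n, U n = s ^ (n₀ + n : ℤ) * u (a * q ^ n) := ⟨_, fun _ => rfl⟩
  have ht : ∀ n : ℕ, a * q ^ n = q ^ (n₀ + n : ℤ) := fun n => by
    rw [ha, zpow_add₀ hq0.ne', zpow_natCast]
  -- weight identity
  have hwt : ∀ n : ℕ, a * q ^ n * (a * q ^ n) ^ (2 * v + 1 : ℝ) =
      s ^ (n₀ + n : ℤ) * s ^ (n₀ + n : ℤ) := fun n => by
    have h0 : 0 < a * q ^ n := by positivity
    rw [hsk, ← Real.rpow_add hq0]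
    nth_rw 1 [← Real.rpow_one (a * q ^ n)]
    rw [← Real.rpow_add h0, ht, ← Real.rpow_intCast, ← Real.rpow_mul hq0.le]
    congr 1; ring
  have hUb : ∃ M, ∀ n, ‖U n‖ ≤ M := by
    have h1 : Summable fun n => U n ^ 2 := by
      refine (hu.mul_left a).congr fun n => ?_
      rw [hU]
      linear_combination (u (a * q ^ n)) ^ 2 * hwt n
    refine ⟨Real.sqrt (∑' n, U n ^ 2), fun n => ?_⟩
    rw [Real.norm_eq_abs]
    exact Real.abs_le_sqrt (h1.le_tsum n fun _ _ => sq_nonneg _)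
  obtain ⟨M, hM⟩ := hUb
  intro z
  obtain ⟨Z, hZ⟩ : ∃ Z : ℕ → ℂ, ∀ n, Z n = ((s ^ (n₀ + n : ℤ) : ℝ) : ℂ) *
    jv v q (z * ((a * q ^ n : ℝ) : ℂ)) := ⟨_, fun _ => rfl⟩
  have hZs : Summable fun n => ‖Z n‖ := by
    obtain ⟨B, hB0, hB⟩ := QS.jv_bdd hq0 hq1 hv (‖z‖ * a)
    have h1 : Summable fun n : ℕ => s ^ n * (s ^ n₀ * B) :=
      (summable_geometric_of_lt_one hs0.le hs1).mul_right _
    refine Summable.of_nonneg_of_le (fun _ => norm_nonneg _) (fun n => ?_) h1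
    rw [hZ, norm_mul, Complex.norm_real, Real.norm_of_nonneg (by positivity),
      zpow_add₀ hs0.ne', zpow_natCast, mul_comm (s ^ n₀), mul_assoc]
    have h2 : ‖jv v q (z * ((a * q ^ n : ℝ) : ℂ))‖ ≤ B := by
      apply hB
      rw [norm_mul, Complex.norm_real, Real.norm_of_nonneg (by positivity)]
      have : q ^ n ≤ 1 := pow_le_one₀ hq0.le hq1.le
      exact mul_le_mul_of_nonneg_left (mul_le_of_le_one_right ha0.le this) (norm_nonneg _)
    gcongr
  -- left side
  have hL : pwExt q v a u z = (C : ℂ) * ∑' n, (U n : ℂ) * Z n := by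
    rw [pwExt, qIntC0, ← hcC, ← tsum_mul_left, ← tsum_mul_left, ← tsum_mul_left]
    apply tsum_congr
    intro n
    have h := congrArg (fun x : ℝ => (x : ℂ)) (hwt n)
    rw [hZ, hU]
    push_cast at h ⊢
    linear_combination ((cqv q v : ℂ) * (1 - q) * u (a * q ^ n) * jv v q (z * (a * q ^ n))) * h
  have hf : ∀ k : ℤ, pwExt q v a u (((q : ℝ) ^ k : ℝ) : ℂ) =
      ((s ^ (-k) : ℝ) : ℂ) * ∑' n : ℕ, ((U n * α (k + (n₀ + n)) : ℝ) : ℂ) := by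
    intro k
    rw [pwExt, qIntC0, ← tsum_mul_left, ← tsum_mul_left, ← tsum_mul_left]
    apply tsum_congr
    intro n
    have h1 : (q : ℝ) ^ (k + (n₀ + n)) = q ^ k * (a * q ^ n) := by
      rw [ht, ← zpow_add₀ hq0.ne']
    have h2 : s ^ (-k) * s ^ (k + (n₀ + n)) = s ^ (n₀ + n : ℤ) := by
      rw [← zpow_add₀ hs0.ne']; congr 1; ring
    rw [hα, h1, ← Complex.ofReal_mul (q ^ k), QS.jv_real, hU, ← hcC]
    norm_cast
    linear_combination (cqv q v * (1 - q) * u (a * q ^ n) * jvR v q (q ^ k * (a * q ^ n))) *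
      (hwt n - s ^ (n₀ + n : ℤ) * h2)
  have hk : ∀ k : ℤ, kkerC q v a z (q ^ k) =
      ((cqv q v * s ^ (-k) : ℝ) : ℂ) * ∑' m : ℕ, Z m * (α (k + (n₀ + m)) : ℂ) := by
    intro k
    rw [kkerC, qIntC0, ← tsum_mul_left, ← tsum_mul_left, ← tsum_mul_left]
    apply tsum_congr
    intro n
    have h1 : (q : ℝ) ^ (k + (n₀ + n)) = q ^ k * (a * q ^ n) := by
      rw [ht, ← zpow_add₀ hq0.ne']
    have h2 : s ^ (-k) * s ^ (k + (n₀ + n)) = s ^ (n₀ + n : ℤ) := by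
      rw [← zpow_add₀ hs0.ne']; congr 1; ring
    have h3 : cqv q v ^ 2 * ((1 - q) * a * (q ^ n * (jvR v q (q ^ k * (a * q ^ n)) *
        (a * q ^ n) ^ (2 * v + 1 : ℝ)))) =
        cqv q v * s ^ (-k) * (s ^ (n₀ + n : ℤ) * α (k + (n₀ + n))) := by
      rw [hα, h1, ← hcC]
      linear_combination (cqv q v ^ 2 * (1 - q) * jvR v q (q ^ k * (a * q ^ n))) *
        (hwt n - s ^ (n₀ + n : ℤ) * h2)
    have h4 := congrArg (fun x : ℝ => (x : ℂ)) h3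
    rw [hZ]
    simp only [Complex.ofReal_mul, Complex.ofReal_pow] at h4 ⊢
    linear_combination (jv v q (z * (a * q ^ n))) * h4
  rw [hL, ← QS.sampling hsum ho n₀ hM hZs, ← hcC, ← tsum_mul_left, ← tsum_mul_left]
  apply tsum_congr
  intro k
  have h5 : q ^ (2 * (k : ℝ) * (v + 1)) * s ^ (-k) * s ^ (-k) = 1 := by
    rw [hsk, mul_assoc, ← Real.rpow_add hq0, ← Real.rpow_add hq0]
    rw [← Real.rpow_zero q]; congr 1; push_cast; ring
  have h6 := congrArg (fun x : ℝ => (x : ℂ)) h5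
  rw [hf, hk]
  simp only [Complex.ofReal_mul, Complex.ofReal_one] at h6 ⊢
  linear_combination (-(cqv q v : ℂ) * ((1 - q : ℝ) : ℂ) *
    (∑' n : ℕ, ((U n : ℂ) * (α (k + (n₀ + n)) : ℂ))) *
    ∑' m : ℕ, Z m * (α (k + (n₀ + m)) : ℂ)) * h6
end

section
/- Approximation by bandlimited truncation: for f \in L^2_{q,2,v} and f_a(x) = \langle f, k_x \rangle, one has f_a \in PW_{q,a}^v and the pointwise error bound |f(x)-f_a(x)|^2 \leq \frac{c_{q,v}^2 \|j_v(\cdot,q^2)\|^2_{q,2,v}}{x^{2v+2}} \int_a^\infty |\mathcal{F}_{q,v}f(t)|^2 t^{2v+1} d_q t; hence for every \delta>0, \sup_{x\in\mathbb{R}_q^+, x>\delta} |f(x)-f_a(x)| \to 0 as a \to \infty along q^{-\mathbb{Z}}. -/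
/-- Tail of the Jackson integral over the points of `ℝ_q⁺` exceeding `a = q^{n₀}`. -/
noncomputable def qIntTail (q : ℝ) (n₀ : ℤ) (f : ℝ → ℝ) : ℝ :=
  (1 - q) * ∑' n : ℕ, (q : ℝ) ^ (n₀ - 1 - (n : ℤ)) * f ((q : ℝ) ^ (n₀ - 1 - (n : ℤ)))

/-- The truncation `f_a(x) = ⟨f, k_x⟩`, where `a = q^{n₀}`. -/
noncomputable def fTrunc (q v : ℝ) (n₀ : ℤ) (f : ℝ → ℝ) (x : ℝ) : ℝ :=
  qInner q v f (kker q v ((q : ℝ) ^ n₀) x)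

open Filter Topology

namespace QB

theorem qPoch_zero (a p : ℝ) : qPoch a p 0 = 1 := by simp [qPoch]

theorem qPoch_succ (a p : ℝ) (n : ℕ) : qPoch a p (n + 1) = qPoch a p n * (1 - a * p ^ n) := by
  simp [qPoch, Finset.prod_range_succ]

theorem qPoch_pos {a p : ℝ} (ha : 0 ≤ a) (ha1 : a < 1) (hp : 0 < p) (hp1 : p < 1) (n : ℕ) :
    0 < qPoch a p n := by
  unfold qPoch
  refine Finset.prod_pos fun i _ => ?_
  have h1 : p ^ i ≤ 1 := pow_le_one₀ hp.le hp1.le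
  have h2 : 0 < p ^ i := by positivity
  nlinarith

noncomputable def dd (p : ℝ) (n : ℕ) : ℝ := (-1) ^ n * p ^ (n.choose 2) / qPoch p p n

noncomputable def ee (p : ℝ) (n : ℕ) : ℝ := 1 / qPoch p p n

noncomputable def Psi (p x : ℝ) : ℝ := ∑' n : ℕ, dd p n * x ^ n

theorem dd_succ {p : ℝ} (hp : 0 < p) (hp1 : p < 1) (n : ℕ) :
    dd p (n + 1) * (1 - p ^ (n + 1)) = - p ^ n * dd p n := by
  have h1 := (qPoch_pos hp.le hp1 hp hp1 n).ne'
  have h2 : 1 - p ^ (n + 1) ≠ 0 := by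
    have : p ^ (n + 1) < 1 := pow_lt_one₀ hp.le hp1 (by omega)
    linarith
  have h3 : 1 - p * p ^ n ≠ 0 := by rwa [← pow_succ']
  have h4 : (n + 1).choose 2 = n + n.choose 2 := by
    rw [Nat.choose_succ_succ' n 1]; simp
  unfold dd
  rw [qPoch_succ, h4, pow_succ' p n, pow_add]
  field_simp
  ring

theorem ee_succ {p : ℝ} (hp : 0 < p) (hp1 : p < 1) (n : ℕ) :
    ee p (n + 1) * (1 - p ^ (n + 1)) = ee p n := by
  have h1 := (qPoch_pos hp.le hp1 hp hp1 n).ne'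
  have h2 : 1 - p ^ (n + 1) ≠ 0 := by
    have : p ^ (n + 1) < 1 := pow_lt_one₀ hp.le hp1 (by omega)
    linarith
  have h3 : 1 - p * p ^ n ≠ 0 := by rwa [← pow_succ']
  unfold ee
  rw [qPoch_succ, pow_succ' p n]
  field_simp

theorem summable_dd {p : ℝ} (hp : 0 < p) (hp1 : p < 1) (x : ℝ) :
    Summable fun n => ‖dd p n * x ^ n‖ := by
  have key : Tendsto (fun n : ℕ => p ^ n * |x| / (1 - p)) atTop (𝓝 0) := by
    have := ((tendsto_pow_atTop_nhds_zero_of_lt_one hp.le hp1).mul_const |x|).div_const (1 - p)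
    simpa using this
  refine summable_of_ratio_norm_eventually_le (r := 1 / 2) (by norm_num) ?_
  filter_upwards [key.eventually (gt_mem_nhds (show (0 : ℝ) < 1 / 2 by norm_num))] with n hn
  have h5 : p ^ (n + 1) ≤ p := by
    simpa using pow_le_pow_of_le_one hp.le hp1.le (show 1 ≤ n + 1 by omega)
  have h6 : dd p (n + 1) = - p ^ n * dd p n / (1 - p ^ (n + 1)) := by
    rw [← dd_succ hp hp1]; field_simp [show 1 - p ^ (n + 1) ≠ 0 by linarith]
  have h7 : 0 < 1 - p := by linarith
  have h8 : 0 < 1 - p ^ (n + 1) := by linarith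
  rw [norm_norm, norm_norm, h6]
  simp only [norm_mul, norm_div, norm_pow, norm_neg, Real.norm_eq_abs, abs_of_pos hp, abs_of_pos h8]
  have h9 : p ^ n * |x| / (1 - p ^ (n + 1)) ≤ 1 / 2 :=
    le_trans (div_le_div_of_nonneg_left (by positivity) h7 (by linarith)) hn.le
  calc p ^ n * |dd p n| / (1 - p ^ (n + 1)) * |x| ^ (n + 1)
      = (p ^ n * |x| / (1 - p ^ (n + 1))) * (|dd p n| * |x| ^ n) := by ring
    _ ≤ _ := by gcongr

theorem summable_ee {p : ℝ} (hp : 0 < p) (hp1 : p < 1) {x : ℝ} (hx : 0 ≤ x) (hx1 : x < 1) :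
    Summable fun n => ‖ee p n * x ^ n‖ := by
  have key : Tendsto (fun n : ℕ => x / (1 - p ^ (n + 1))) atTop (𝓝 x) := by
    have h1 : Tendsto (fun n : ℕ => 1 - p ^ (n + 1)) atTop (𝓝 (1 - 0)) :=
      ((tendsto_pow_atTop_nhds_zero_of_lt_one hp.le hp1).comp (tendsto_add_atTop_nat 1)).const_sub 1
    have := (tendsto_const_nhds (x := x)).div h1 (by norm_num)
    rw [sub_zero, div_one] at this
    exact this
  obtain ⟨r, hr, hr1⟩ := exists_between hx1
  refine summable_of_ratio_norm_eventually_le (r := r) hr1 ?_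
  filter_upwards [key.eventually (gt_mem_nhds hr)] with n hn
  have h5 : p ^ (n + 1) < 1 := pow_lt_one₀ hp.le hp1 (by omega)
  have h8 : 0 < 1 - p ^ (n + 1) := by linarith
  have h6 : ee p (n + 1) = ee p n / (1 - p ^ (n + 1)) := by
    rw [← ee_succ hp hp1 n]; field_simp
  rw [norm_norm, norm_norm, h6]
  simp only [norm_mul, norm_div, norm_pow, Real.norm_eq_abs, abs_of_pos h8, abs_of_nonneg hx]
  calc |ee p n| / (1 - p ^ (n + 1)) * x ^ (n + 1)
      = (x / (1 - p ^ (n + 1))) * (|ee p n| * x ^ n) := by ring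
    _ ≤ _ := by gcongr

theorem dd_zero (p : ℝ) : dd p 0 = 1 := by simp [dd, qPoch_zero]
theorem ee_zero (p : ℝ) : ee p 0 = 1 := by simp [ee, qPoch_zero]

theorem Psi_step {p : ℝ} (hp : 0 < p) (hp1 : p < 1) (x : ℝ) :
    Psi p x = (1 - x) * Psi p (x * p) := by
  have h1 := (summable_dd hp hp1 x).of_norm
  have h2 := (summable_dd hp hp1 (x * p)).of_norm
  have h3 : Psi p x - Psi p (x * p) = - x * Psi p (x * p) := by
    unfold Psi
    rw [← h1.tsum_sub h2, (h1.sub h2).tsum_eq_zero_add, ← tsum_mul_left]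
    simp only [pow_zero, mul_one, sub_self, zero_add]
    refine tsum_congr fun n => ?_
    have := dd_succ hp hp1 n
    rw [mul_pow, mul_pow]
    linear_combination x ^ (n + 1) * this
  linarith

theorem Psi_iter {p : ℝ} (hp : 0 < p) (hp1 : p < 1) (x : ℝ) (n : ℕ) :
    Psi p x = qPoch x p n * Psi p (x * p ^ n) := by
  induction n with
  | zero => simp [qPoch_zero]
  | succ n ih =>
    rw [ih, qPoch_succ, Psi_step hp hp1 (x * p ^ n), pow_succ]
    ring_nf

theorem Psi_eq {p : ℝ} (hp : 0 < p) (hp1 : p < 1) (x : ℝ) : qPochInf x p = Psi p x := by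
  have hm : Multipliable fun i : ℕ => (1 - x * p ^ i) := by
    have : Summable fun i : ℕ => - (x * p ^ i) :=
      ((summable_geometric_of_lt_one hp.le hp1).mul_left x).neg
    simpa [sub_eq_add_neg] using Real.multipliable_one_add_of_summable this
  have h1 : Tendsto (fun n => qPoch x p n) atTop (𝓝 (qPochInf x p)) := hm.hasProd.tendsto_prod_nat
  have h2 : Tendsto (fun n : ℕ => Psi p (x * p ^ n)) atTop (𝓝 1) := by
    have h3 : (1 : ℝ) = ∑' n : ℕ, dd p n * 0 ^ n := by
      rw [tsum_eq_single 0]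
      · simp [dd_zero]
      · intro n hn; simp [hn]
    rw [h3]
    unfold Psi
    refine tendsto_tsum_of_dominated_convergence (summable_dd hp hp1 x) ?_ ?_
    · intro k
      have h4 : Tendsto (fun n : ℕ => x * p ^ n) atTop (𝓝 0) := by
        simpa using (tendsto_pow_atTop_nhds_zero_of_lt_one hp.le hp1).const_mul x
      exact (h4.pow k).const_mul _
    · refine Eventually.of_forall fun n k => ?_
      simp only [norm_mul, norm_pow, Real.norm_eq_abs, abs_of_pos hp]
      have : p ^ n ≤ 1 := pow_le_one₀ hp.le hp1.le
      have : |x| * p ^ n ≤ |x| := mul_le_of_le_one_right (abs_nonneg _) this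
      gcongr
  have h5 := h1.mul h2
  have h6 : (fun n => qPoch x p n * Psi p (x * p ^ n)) = fun _ => Psi p x := by
    funext n; exact (Psi_iter hp hp1 x n).symm
  rw [h6, mul_one] at h5
  exact tendsto_nhds_unique h5 tendsto_const_nhds

open PowerSeries in
theorem cauchy {p : ℝ} (hp : 0 < p) (hp1 : p < 1) (N : ℕ) :
    ∑ kl ∈ Finset.HasAntidiagonal.antidiagonal N, ee p kl.1 * dd p kl.2 = if N = 0 then 1 else 0 := by
  rcases Nat.eq_zero_or_pos N with rfl | hN
  · simp [dd_zero, ee_zero]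
  rw [if_neg hN.ne']
  set E : PowerSeries ℝ := PowerSeries.mk (ee p)
  set D : PowerSeries ℝ := PowerSeries.mk (dd p)
  have hE : rescale p E = (1 - X) * E := by
    ext n
    cases n with
    | zero => simp [E, sub_mul]
    | succ n =>
      rw [coeff_rescale, sub_mul, one_mul, map_sub, coeff_succ_X_mul]
      simp only [E, coeff_mk]
      linear_combination - ee_succ hp hp1 n
  have hD : D = (1 - X) * rescale p D := by
    ext n
    cases n with
    | zero =>
      rw [sub_mul, one_mul, map_sub, coeff_zero_X_mul, coeff_rescale]; simp
    | succ n =>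
      rw [sub_mul, one_mul, map_sub, coeff_succ_X_mul, coeff_rescale, coeff_rescale]
      simp only [D, coeff_mk]
      linear_combination dd_succ hp hp1 n
  have h : rescale p (E * D) = E * D := by
    rw [map_mul, hE]
    conv_rhs => rw [hD]
    ring
  have h2 := congrArg (coeff N) h
  rw [coeff_rescale, coeff_mul] at h2
  simp only [E, D, coeff_mk] at h2
  have h3 : p ^ N < 1 := pow_lt_one₀ hp.le hp1 hN.ne'
  have h4 : (1 - p ^ N) * ∑ kl ∈ Finset.HasAntidiagonal.antidiagonal N, ee p kl.1 * dd p kl.2 = 0 := by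
    linear_combination - h2
  rcases mul_eq_zero.1 h4 with h5 | h5
  · linarith
  · exact h5

theorem cauchy_pow {p : ℝ} (hp : 0 < p) (hp1 : p < 1) (s : ℝ) (N : ℕ) :
    ∑ kl ∈ Finset.HasAntidiagonal.antidiagonal N, (ee p kl.1 * s ^ kl.1) * (dd p kl.2 * s ^ kl.2)
      = if N = 0 then 1 else 0 := by
  have : ∀ kl ∈ Finset.HasAntidiagonal.antidiagonal N, (ee p kl.1 * s ^ kl.1) * (dd p kl.2 * s ^ kl.2)
      = s ^ N * (ee p kl.1 * dd p kl.2) := by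
    intro kl h
    rw [← Finset.HasAntidiagonal.mem_antidiagonal.1 h, pow_add]; ring
  rw [Finset.sum_congr rfl this, ← Finset.mul_sum, cauchy hp hp1]
  split_ifs with h <;> simp [h]

theorem Psi_ne {p : ℝ} (hp : 0 < p) (hp1 : p < 1) {x : ℝ} (hx : 0 ≤ x) (hx1 : x < 1) :
    Psi p x ≠ 0 := by
  have h := tsum_mul_tsum_eq_tsum_sum_antidiagonal_of_summable_norm
    (summable_ee hp hp1 hx hx1) (summable_dd hp hp1 x)
  simp only [cauchy_pow hp hp1] at h
  rw [tsum_ite_eq] at h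
  intro h0
  unfold Psi at h0
  rw [h0] at h
  simp at h

/-- extension of `1/(p;p)_n` to integers -/
noncomputable def eZ (p : ℝ) (k : ℤ) : ℝ := if 0 ≤ k then ee p k.toNat else 0

theorem Psi_zpow {p : ℝ} (hp : 0 < p) (hp1 : p < 1) (k : ℤ) :
    Psi p (p ^ (k + 1)) = Psi p p * eZ p k := by
  unfold eZ
  split_ifs with h
  · lift k to ℕ using h
    have h1 := Psi_iter hp hp1 p k
    have h2 := (qPoch_pos hp.le hp1 hp hp1 k).ne'
    have h3 : p ^ ((k : ℤ) + 1) = p * p ^ k := by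
      rw [zpow_add₀ hp.ne']; simp [mul_comm]
    rw [h3, h1]
    simp only [ee, Int.toNat_natCast]
    field_simp
  · obtain ⟨m, hm⟩ : ∃ m : ℕ, k + 1 = - (m : ℤ) := ⟨(-(k+1)).toNat, by omega⟩
    rw [hm, Psi_iter hp hp1 _ (m + 1), qPoch_succ]
    have : p ^ (-(m : ℤ)) * p ^ m = 1 := by
      rw [zpow_neg, zpow_natCast]; field_simp
    rw [this]; simp

theorem transform {p b : ℝ} (hp : 0 < p) (hp1 : p < 1) (hb : 0 ≤ b) (hb1 : b < 1) (z : ℝ) :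
    Psi p b * ∑' n : ℕ, dd p n * z ^ n / qPoch b p n = ∑' j : ℕ, dd p j * b ^ j * Psi p (z * p ^ j) := by
  have h1 : ∀ n : ℕ, Psi p b * (dd p n * z ^ n / qPoch b p n) =
      ∑' j : ℕ, dd p n * dd p j * z ^ n * b ^ j * p ^ (n * j) := by
    intro n
    have h2 := (qPoch_pos hb hb1 hp hp1 n).ne'
    rw [Psi_iter hp hp1 b n]
    rw [show qPoch b p n * Psi p (b * p ^ n) * (dd p n * z ^ n / qPoch b p n) =
      dd p n * z ^ n * Psi p (b * p ^ n) by field_simp]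
    unfold Psi
    rw [← tsum_mul_left]
    refine tsum_congr fun j => ?_
    rw [mul_pow, ← pow_mul]; ring
  have h3 : ∀ j : ℕ, dd p j * b ^ j * Psi p (z * p ^ j) =
      ∑' n : ℕ, dd p n * dd p j * z ^ n * b ^ j * p ^ (n * j) := by
    intro j
    unfold Psi
    rw [← tsum_mul_left]
    refine tsum_congr fun n => ?_
    rw [mul_pow, ← pow_mul, mul_comm j n]; ring
  rw [← tsum_mul_left]
  simp only [h1, h3]
  symm
  apply Summable.tsum_comm
  have h4 := (summable_dd hp hp1 z).mul_of_nonneg (summable_dd hp hp1 b)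
    (fun _ => norm_nonneg _) (fun _ => norm_nonneg _)
  refine Summable.of_norm_bounded h4 ?_
  rintro ⟨n, j⟩
  simp only [Function.uncurry, norm_mul, norm_pow, Real.norm_eq_abs, abs_of_pos hp]
  have : p ^ (n * j) ≤ 1 := pow_le_one₀ hp.le hp1.le
  calc _ = (|dd p n| * |z| ^ n * (|dd p j| * |b| ^ j)) * p ^ (n * j) := by ring
    _ ≤ _ := mul_le_of_le_one_right (by positivity) this

end QB

namespace QB

abbrev L2 := lp (fun _ : ℤ => ℝ) 2

theorem memL2_iff (g : ℤ → ℝ) : Memℓp g 2 ↔ Summable fun n => g n ^ 2 := by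
  rw [memℓp_gen_iff (by norm_num)]
  simp

theorem L2_summable (g : L2) : Summable fun n => g n ^ 2 := (memL2_iff _).1 (lp.memℓp g)

theorem L2_norm (g : L2) : ‖g‖ ^ 2 = ∑' n, g n ^ 2 := by
  have := lp.norm_rpow_eq_tsum (p := 2) (by norm_num) g
  simpa using this

/-- composition operator -/
noncomputable def compE (σ : ℤ ≃ ℤ) : L2 →L[ℝ] L2 :=
  LinearMap.mkContinuous
    { toFun := fun g => ⟨fun n => g (σ n), (memL2_iff _).2 ((L2_summable g).comp_injective σ.injective)⟩
      map_add' := fun _ _ => rfl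
      map_smul' := fun _ _ => rfl } 1 (fun g => by
        rw [one_mul]
        refine le_of_sq_le_sq ?_ (norm_nonneg _)
        rw [L2_norm, L2_norm]
        exact (σ.tsum_eq (fun n => g n ^ 2)).le)

theorem compE_apply (σ : ℤ ≃ ℤ) (g : L2) (n : ℤ) : compE σ g n = g (σ n) := rfl

theorem compE_norm (σ : ℤ ≃ ℤ) : ‖compE σ‖ ≤ 1 := LinearMap.mkContinuous_norm_le _ zero_le_one _

/-- truncation operator -/
noncomputable def proj (n₀ : ℤ) : L2 →L[ℝ] L2 :=
  LinearMap.mkContinuous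
    { toFun := fun g => ⟨fun n => if n₀ ≤ n then g n else 0, (memL2_iff _).2 (by
        refine Summable.of_nonneg_of_le (fun _ => sq_nonneg _) (fun n => ?_) (L2_summable g)
        split_ifs
        · exact le_rfl
        · simpa using sq_nonneg (g n))⟩
      map_add' := fun f g => by
        ext n
        show (if n₀ ≤ n then f n + g n else 0) = (if n₀ ≤ n then f n else 0) + if n₀ ≤ n then g n else 0
        by_cases h : n₀ ≤ n <;> simp [h]
      map_smul' := fun c g => by
        ext n; by_cases h : n₀ ≤ n <;> simp [h] } 1 (fun g => by
        rw [one_mul]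
        refine le_of_sq_le_sq ?_ (norm_nonneg _)
        rw [L2_norm, L2_norm]
        refine Summable.tsum_le_tsum (fun n => ?_) (L2_summable _) (L2_summable g)
        show (if n₀ ≤ n then g n else 0) ^ 2 ≤ g n ^ 2
        split_ifs
        · exact le_rfl
        · simpa using sq_nonneg (g n))

theorem proj_apply (n₀ : ℤ) (g : L2) (n : ℤ) : proj n₀ g n = if n₀ ≤ n then g n else 0 := rfl

abbrev Op := L2 →L[ℝ] L2

noncomputable def conv (c : ℕ → ℝ) (T : Op) : Op := ∑' i, c i • T ^ i

theorem conv_summable {c : ℕ → ℝ} (hc : Summable fun i => ‖c i‖) {T : Op} (hT : ‖T‖ ≤ 1) :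
    Summable fun i => ‖c i • T ^ i‖ := by
  refine Summable.of_nonneg_of_le (fun _ => norm_nonneg _) (fun i => ?_) hc
  rw [norm_smul]
  have h1 : ‖T ^ i‖ ≤ 1 := by
    induction i with
    | zero => rw [pow_zero]; exact ContinuousLinearMap.norm_id_le
    | succ n ih =>
      rw [pow_succ]
      exact (norm_mul_le _ _).trans (mul_le_one₀ ih (norm_nonneg _) hT)
  exact mul_le_of_le_one_right (norm_nonneg _) h1

theorem conv_mul {c d : ℕ → ℝ} (hc : Summable fun i => ‖c i‖) (hd : Summable fun i => ‖d i‖)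
    (h : ∀ N, ∑ kl ∈ Finset.HasAntidiagonal.antidiagonal N, c kl.1 * d kl.2 = if N = 0 then 1 else 0)
    {T : Op} (hT : ‖T‖ ≤ 1) : conv c T * conv d T = 1 := by
  unfold conv
  rw [tsum_mul_tsum_eq_tsum_sum_antidiagonal_of_summable_norm (conv_summable hc hT)
    (conv_summable hd hT)]
  have : ∀ N, ∑ kl ∈ Finset.HasAntidiagonal.antidiagonal N, (c kl.1 • T ^ kl.1) * (d kl.2 • T ^ kl.2)
      = if N = 0 then (1 : Op) else 0 := by
    intro N
    have h1 : ∀ kl ∈ Finset.HasAntidiagonal.antidiagonal N,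
        (c kl.1 • T ^ kl.1) * (d kl.2 • T ^ kl.2) = (c kl.1 * d kl.2) • T ^ N := by
      intro kl hkl
      rw [← Finset.HasAntidiagonal.mem_antidiagonal.1 hkl, pow_add, smul_mul_smul_comm]
    rw [Finset.sum_congr rfl h1, ← Finset.sum_smul, h]
    split_ifs with h0
    · simp [h0]
    · simp
  simp only [this]
  rw [tsum_ite_eq]

theorem conv_semiconj {c : ℕ → ℝ} (hc : Summable fun i => ‖c i‖) {J T T' : Op} (hT : ‖T‖ ≤ 1)
    (hT' : ‖T'‖ ≤ 1) (h : J * T = T' * J) : J * conv c T = conv c T' * J := by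
  unfold conv
  rw [← (conv_summable hc hT).of_norm.tsum_mul_left, ← (conv_summable hc hT').of_norm.tsum_mul_right]
  refine tsum_congr fun i => ?_
  have h1 : J * T ^ i = T' ^ i * J := (SemiconjBy.pow_right (show SemiconjBy J T T' from h) i)
  rw [mul_smul_comm, h1, smul_mul_assoc]

theorem conv_apply {c : ℕ → ℝ} (hc : Summable fun i => ‖c i‖) {T : Op} (hT : ‖T‖ ≤ 1) (g : L2)
    (n : ℤ) : HasSum (fun i => c i * (T ^ i) g n) (conv c T g n) := by
  have h1 := (conv_summable hc hT).of_norm.hasSum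
  have h2 := h1.mapL (ContinuousLinearMap.apply ℝ L2 g)
  exact h2.mapL (lp.evalCLM ℝ (fun _ : ℤ => ℝ) 2 n)

noncomputable def Rop : Op := compE (Equiv.subRight (1 : ℤ))
noncomputable def Lop : Op := compE (Equiv.addRight (1 : ℤ))
noncomputable def Jop : Op := compE (Equiv.neg ℤ)

theorem Rpow (i : ℕ) (g : L2) (n : ℤ) : (Rop ^ i) g n = g (n - i) := by
  induction i generalizing n with
  | zero => simp
  | succ i ih =>
    rw [pow_succ']
    show (Rop ^ i) g (n - 1) = _
    rw [ih, show n - 1 - (i : ℤ) = n - ((i + 1 : ℕ) : ℤ) by push_cast; ring]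

theorem Lpow (i : ℕ) (g : L2) (n : ℤ) : (Lop ^ i) g n = g (n + i) := by
  induction i generalizing n with
  | zero => simp
  | succ i ih =>
    rw [pow_succ']
    show (Lop ^ i) g (n + 1) = _
    rw [ih, show n + 1 + (i : ℤ) = n + ((i + 1 : ℕ) : ℤ) by push_cast; ring]

theorem JJ : Jop * Jop = 1 := by
  ext g n
  show g (- -n) = g n
  rw [neg_neg]

theorem JL : Jop * Lop = Rop * Jop := by
  ext g n
  show g (-n + 1) = g (-(n - 1))
  rw [show -n + 1 = -(n - 1) by ring]

theorem JR : Jop * Rop = Lop * Jop := by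
  ext g n
  show g (-n - 1) = g (-(n + 1))
  rw [show -n - 1 = -(n + 1) by ring]

noncomputable def Hop (p s : ℝ) : Op :=
  conv (fun n => dd p n * s ^ n) Lop * conv (fun n => ee p n * s ^ n) Rop * Jop

theorem Hop_sq {p s : ℝ} (hp : 0 < p) (hp1 : p < 1) (hs : 0 ≤ s) (hs1 : s < 1) :
    Hop p s * Hop p s = 1 := by
  have hd := summable_dd hp hp1 s
  have he := summable_ee hp hp1 hs hs1
  have hR : ‖Rop‖ ≤ 1 := compE_norm _
  have hL : ‖Lop‖ ≤ 1 := compE_norm _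
  have h1 := conv_mul he hd (cauchy_pow hp hp1 s) hR
  have h2 : conv (fun n => dd p n * s ^ n) Lop * conv (fun n => ee p n * s ^ n) Lop = 1 := by
    refine conv_mul hd he (fun N => ?_) hL
    rw [← cauchy_pow hp hp1 s N, ← Finset.Nat.sum_antidiagonal_swap]
    refine Finset.sum_congr rfl fun kl _ => ?_
    simp [mul_comm]
  have h3 := conv_semiconj hd hL hR JL
  have h4 := conv_semiconj he hR hL JR
  unfold Hop
  set DL := conv (fun n => dd p n * s ^ n) Lop
  set DR := conv (fun n => dd p n * s ^ n) Rop
  set EL := conv (fun n => ee p n * s ^ n) Lop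
  set ER := conv (fun n => ee p n * s ^ n) Rop
  calc DL * ER * Jop * (DL * ER * Jop) = DL * ER * (Jop * DL) * ER * Jop := by simp only [mul_assoc]
    _ = DL * (ER * DR) * (Jop * ER) * Jop := by rw [h3]; simp only [mul_assoc]
    _ = DL * EL * (Jop * Jop) := by rw [h1, h4, mul_one]; simp only [mul_assoc]
    _ = 1 := by rw [h2, JJ, mul_one]

noncomputable def sing (n : ℤ) : L2 := lp.single 2 n (1 : ℝ)

theorem sing_apply (n m : ℤ) : sing n m = if m = n then 1 else 0 := by
  simp [sing, lp.single_apply, Pi.single_apply]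

theorem Hop_sing {p s : ℝ} (hp : 0 < p) (hp1 : p < 1) (hs : 0 < s) (hs1 : s < 1) (n m : ℤ) :
    Hop p s (sing n) m = ∑' j : ℕ, (dd p j * s ^ j) * (eZ p (m + n + j) * s ^ (m + n + j)) := by
  have hd := summable_dd hp hp1 s
  have he := summable_ee hp hp1 hs.le hs1
  have hR : ‖Rop‖ ≤ 1 := compE_norm _
  have hL : ‖Lop‖ ≤ 1 := compE_norm _
  have h1 := (conv_apply hd hL (conv (fun n => ee p n * s ^ n) Rop (Jop (sing n))) m).tsum_eq
  refine h1.symm.trans (tsum_congr fun j => ?_)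
  rw [Lpow]
  congr 1
  rw [← (conv_apply he hR (Jop (sing n)) (m + j)).tsum_eq]
  have h2 : ∀ i : ℕ, (Rop ^ i) (Jop (sing n)) (m + j) = if (i : ℤ) = m + n + j then 1 else 0 := by
    intro i
    rw [Rpow]
    show sing n (-(m + j - i)) = _
    rw [sing_apply]
    congr 1
    apply propext
    constructor <;> intro h <;> omega
  simp only [h2]
  unfold eZ
  split_ifs with h
  · obtain ⟨k, hk⟩ := Int.eq_ofNat_of_zero_le h
    rw [hk, tsum_eq_single k]
    · simp
    · intro i hi
      simp [hi]
  · rw [zero_mul]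
    convert tsum_zero with i
    rw [if_neg (by omega), mul_zero]

theorem op_apply (T : Op) (g : L2) (m : ℤ) : HasSum (fun n => g n * T (sing n) m) (T g m) := by
  have h1 := lp.hasSum_single (p := 2) (by norm_num) g
  have h2 := (h1.mapL T).mapL (lp.evalCLM ℝ (fun _ : ℤ => ℝ) 2 m)
  have h3 : ∀ n, g n * T (sing n) m =
      lp.evalCLM ℝ (fun _ : ℤ => ℝ) 2 m (T (lp.single 2 n (g n))) := by
    intro n
    have : lp.single 2 n (g n) = g n • sing n := by
      ext k
      simp [sing, lp.single_apply, Pi.single_apply]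
    rw [this, map_smul]
    rfl
  simp only [h3]
  exact h2

end QB

namespace QB

noncomputable def ss (q v : ℝ) : ℝ := q ^ (v + 1 : ℝ)

noncomputable def AA (q v : ℝ) (m : ℤ) : ℝ :=
  cqv q v * (1 - q) * ss q v ^ m * jvR v q (q ^ m)

theorem ss_pos {q v : ℝ} (hq0 : 0 < q) : 0 < ss q v := Real.rpow_pos_of_pos hq0 _

theorem ss_lt {q v : ℝ} (hq0 : 0 < q) (hq1 : q < 1) (hv : -1 < v) : ss q v < 1 :=
  Real.rpow_lt_one hq0.le hq1 (by linarith)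

theorem ss_sq {q v : ℝ} (hq0 : 0 < q) : q ^ (2 * v + 2 : ℝ) = ss q v ^ 2 := by
  unfold ss
  rw [← Real.rpow_natCast, ← Real.rpow_mul hq0.le]
  congr 1; push_cast; ring

theorem ss_zpow {q v : ℝ} (hq0 : 0 < q) (n : ℤ) :
    ((q : ℝ) ^ n) ^ (2 * v + 2 : ℝ) = (ss q v ^ n) ^ 2 := by
  unfold ss
  rw [← Real.rpow_natCast, ← Real.rpow_intCast, ← Real.rpow_intCast, ← Real.rpow_mul hq0.le,
    ← Real.rpow_mul hq0.le, ← Real.rpow_mul hq0.le]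
  congr 1; push_cast; ring

theorem weight {q v : ℝ} (hq0 : 0 < q) (n : ℤ) :
    (q : ℝ) ^ n * ((q : ℝ) ^ n) ^ (2 * v + 1 : ℝ) = (ss q v ^ n) ^ 2 := by
  have h : 0 < q ^ n := zpow_pos hq0 n
  rw [← ss_zpow hq0, show 2 * v + 2 = 1 + (2 * v + 1) by ring, Real.rpow_add h 1, Real.rpow_one]

theorem jv_eq {q v : ℝ} (hq0 : 0 < q) (m : ℤ) :
    jvR v q (q ^ m) = ∑' n : ℕ, dd (q ^ 2) n * ((q ^ 2) ^ (m + 1)) ^ n /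
      qPoch (ss q v ^ 2) (q ^ 2) n := by
  unfold jvR
  refine tsum_congr fun n => ?_
  rw [ss_sq hq0]
  unfold dd
  have h1 : q ^ (n * (n + 1)) = (q ^ 2) ^ (n.choose 2) * (q ^ 2) ^ n := by
    rw [← pow_add, ← pow_mul]
    congr 1
    induction n with
    | zero => simp
    | succ n ih =>
      have h4 : (n + 1).choose 2 = n + n.choose 2 := by
        rw [Nat.choose_succ_succ' n 1]; simp
      rw [h4]; nlinarith
  have h2 : ((q ^ 2) ^ (m + 1)) ^ n = (q ^ m) ^ (2 * n) * (q ^ 2) ^ n := by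
    rw [zpow_add₀ (by positivity), zpow_one, mul_pow, pow_mul]
    congr 2
    rw [← zpow_natCast, ← zpow_natCast, ← zpow_mul, ← zpow_mul, mul_comm]
  rw [h1, h2]
  rw [div_mul_eq_mul_div, div_div]
  congr 1; ring

theorem AA_eq {q v : ℝ} (hq0 : 0 < q) (hq1 : q < 1) (hv : -1 < v) (m : ℤ) :
    AA q v m = ∑' j : ℕ, (dd (q ^ 2) j * ss q v ^ j) *
      (eZ (q ^ 2) (m + j) * ss q v ^ (m + j)) := by
  have hp : 0 < q ^ 2 := by positivity
  have hp1 : q ^ 2 < 1 := pow_lt_one₀ hq0.le hq1 (by norm_num)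
  have hs := ss_pos (v := v) hq0
  have hs1 := ss_lt hq0 hq1 hv
  have hb1 : ss q v ^ 2 < 1 := pow_lt_one₀ hs.le hs1 (by norm_num)
  have h1 := transform hp hp1 (sq_nonneg (ss q v)) hb1 ((q ^ 2) ^ (m + 1))
  rw [← jv_eq hq0] at h1
  have hP := Psi_ne hp hp1 hp.le hp1
  have h2 : ∀ j : ℕ, (q ^ 2) ^ (m + 1) * (q ^ 2) ^ j = (q ^ 2) ^ ((m + j) + 1) := by
    intro j
    rw [← zpow_natCast (q ^ 2) j, ← zpow_add₀ hp.ne']; congr 1; ring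
  simp only [h2, Psi_zpow hp hp1] at h1
  have h3 : cqv q v * (1 - q) = Psi (q ^ 2) (ss q v ^ 2) / Psi (q ^ 2) (q ^ 2) := by
    unfold cqv
    rw [ss_sq hq0, Psi_eq hp hp1, Psi_eq hp hp1]
    have : 1 - q ≠ 0 := by linarith
    field_simp
  unfold AA
  rw [h3]
  rw [show Psi (q ^ 2) (ss q v ^ 2) / Psi (q ^ 2) (q ^ 2) * ss q v ^ m * jvR v q (q ^ m)
    = (ss q v ^ m / Psi (q ^ 2) (q ^ 2)) * (Psi (q ^ 2) (ss q v ^ 2) * jvR v q (q ^ m)) by ring,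
    h1, ← tsum_mul_left]
  refine tsum_congr fun j => ?_
  rw [zpow_add₀ hs.ne', zpow_natCast]
  field_simp
  ring

noncomputable def HH (q v : ℝ) : Op := Hop (q ^ 2) (ss q v)

theorem HH_sq {q v : ℝ} (hq0 : 0 < q) (hq1 : q < 1) (hv : -1 < v) (g : L2) :
    HH q v (HH q v g) = g := by
  have h := Hop_sq (p := q ^ 2) (by positivity) (pow_lt_one₀ hq0.le hq1 (by norm_num))
    (ss_pos (v := v) hq0).le (ss_lt hq0 hq1 hv)
  exact congrArg (fun T : Op => T g) h

theorem HH_sing {q v : ℝ} (hq0 : 0 < q) (hq1 : q < 1) (hv : -1 < v) (n m : ℤ) :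
    HH q v (sing n) m = AA q v (m + n) := by
  rw [AA_eq hq0 hq1 hv]
  exact Hop_sing (by positivity) (pow_lt_one₀ hq0.le hq1 (by norm_num))
    (ss_pos (v := v) hq0) (ss_lt hq0 hq1 hv) n m

theorem HH_apply {q v : ℝ} (hq0 : 0 < q) (hq1 : q < 1) (hv : -1 < v) (g : L2) (m : ℤ) :
    HH q v g m = ∑' n, g n * AA q v (m + n) := by
  rw [← (op_apply (HH q v) g m).tsum_eq]
  simp only [HH_sing hq0 hq1 hv]

theorem Fqv_eq {q v : ℝ} (hq0 : 0 < q) (hq1 : q < 1) (hv : -1 < v) (f : ℝ → ℝ) (g : L2)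
    (hg : ∀ n, g n = ss q v ^ n * f (q ^ n)) (m : ℤ) :
    ss q v ^ m * Fqv q v f (q ^ m) = HH q v g m := by
  have hs := ss_pos (v := v) hq0
  rw [HH_apply hq0 hq1 hv]
  unfold Fqv qIntInf
  rw [← tsum_mul_left, ← tsum_mul_left, ← tsum_mul_left]
  refine tsum_congr fun n => ?_
  have hw := weight (v := v) hq0 n
  rw [hg, AA, zpow_add₀ hs.ne', zpow_add₀ hq0.ne']
  linear_combination (ss q v ^ m * cqv q v * (1 - q) * f (q ^ n) * jvR v q (q ^ m * q ^ n)) * hw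

theorem kker_eq {q v : ℝ} (hq0 : 0 < q) (hq1 : q < 1) (hv : -1 < v) (n₀ k n : ℤ) :
    ss q v ^ k * ss q v ^ n * (1 - q) * kker q v (q ^ n₀) (q ^ k) (q ^ n) =
      HH q v (proj n₀ (HH q v (sing n))) k := by
  have hs := ss_pos (v := v) hq0
  rw [HH_apply hq0 hq1 hv]
  simp only [proj_apply, HH_sing hq0 hq1 hv]
  have hinj : Function.Injective fun i : ℕ => n₀ + (i : ℤ) := by
    intro a b h; simpa using h
  rw [← hinj.tsum_eq (f := fun m => (if n₀ ≤ m then AA q v (m + n) else 0) * AA q v (k + m))]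
  · unfold kker qInt0
    rw [← tsum_mul_left, ← tsum_mul_left, ← tsum_mul_left]
    refine tsum_congr fun i => ?_
    rw [if_pos (by omega)]
    have hw := weight (v := v) hq0 (n₀ + i)
    rw [zpow_add₀ hq0.ne', zpow_natCast] at hw
    unfold AA
    simp only [zpow_add₀ hq0.ne', zpow_add₀ hs.ne', zpow_natCast] at hw ⊢
    rw [mul_comm (q ^ n₀ * q ^ i) (q ^ n)]
    linear_combination (ss q v ^ k * ss q v ^ n * cqv q v ^ 2 * (1 - q) ^ 2 *
      jvR v q (q ^ k * (q ^ n₀ * q ^ i)) * jvR v q (q ^ n * (q ^ n₀ * q ^ i))) * hw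
  · intro m hm
    by_cases h : n₀ ≤ m
    · exact ⟨(m - n₀).toNat, by simp; omega⟩
    · simp [h] at hm

theorem fTrunc_eq {q v : ℝ} (hq0 : 0 < q) (hq1 : q < 1) (hv : -1 < v) (f : ℝ → ℝ) (g : L2)
    (hg : ∀ n, g n = ss q v ^ n * f (q ^ n)) (n₀ k : ℤ) :
    ss q v ^ k * fTrunc q v n₀ f (q ^ k) = HH q v (proj n₀ (HH q v g)) k := by
  have h := (op_apply (HH q v * proj n₀ * HH q v) g k).tsum_eq
  refine Eq.trans ?_ h
  unfold fTrunc qInner qIntInf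
  rw [← tsum_mul_left, ← tsum_mul_left]
  refine tsum_congr fun n => ?_
  have hw := weight (v := v) hq0 n
  refine Eq.trans ?_ (congrArg (g n * ·) (kker_eq hq0 hq1 hv n₀ k n))
  rw [hg]
  simp only
  linear_combination (ss q v ^ k * (1 - q) * f (q ^ n) * kker q v (q ^ n₀) (q ^ k) (q ^ n)) * hw

theorem tail_norm (n₀ : ℤ) (h : L2) :
    ‖h - proj n₀ h‖ ^ 2 = ∑' i : ℕ, h (n₀ - 1 - (i : ℤ)) ^ 2 := by
  rw [L2_norm]
  have hinj : Function.Injective fun i : ℕ => n₀ - 1 - (i : ℤ) := by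
    intro a b h; simpa using h
  rw [← hinj.tsum_eq]
  · refine tsum_congr fun i => ?_
    show (h (n₀ - 1 - (i : ℤ)) - proj n₀ h (n₀ - 1 - (i : ℤ))) ^ 2 = _
    rw [proj_apply, if_neg (by omega), sub_zero]
  · intro m hm
    by_cases h1 : n₀ ≤ m
    · exfalso
      apply hm
      show (h m - proj n₀ h m) ^ 2 = 0
      rw [proj_apply, if_pos h1]; ring
    · exact ⟨(n₀ - 1 - m).toNat, by simp; omega⟩

theorem op_bound {q v : ℝ} (hq0 : 0 < q) (hq1 : q < 1) (hv : -1 < v) (h : L2) (k : ℤ) :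
    (HH q v h k) ^ 2 ≤ (∑' m, AA q v m ^ 2) * ‖h‖ ^ 2 := by
  have h1 : HH q v h k = inner ℝ h (HH q v (sing k)) := by
    rw [HH_apply hq0 hq1 hv, lp.inner_eq_tsum]
    refine tsum_congr fun n => ?_
    rw [HH_sing hq0 hq1 hv, add_comm k n]
    simp [mul_comm]
  have h2 : ‖HH q v (sing k)‖ ^ 2 = ∑' m, AA q v m ^ 2 := by
    rw [L2_norm]
    simp only [HH_sing hq0 hq1 hv]
    exact (Equiv.addRight k).tsum_eq (fun m => AA q v m ^ 2)
  rw [← h2, h1, ← sq_abs, ← mul_pow]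
  have := abs_real_inner_le_norm h (HH q v (sing k))
  rw [mul_comm]
  exact pow_le_pow_left₀ (abs_nonneg _) this 2

theorem S_eq {q v : ℝ} (hq0 : 0 < q) :
    ∑' m, AA q v m ^ 2 =
      (1 - q) * (cqv q v ^ 2 * qIntInf q (fun t => (jvR v q t) ^ 2 * t ^ (2 * v + 1 : ℝ))) := by
  unfold qIntInf
  rw [← tsum_mul_left, ← tsum_mul_left, ← tsum_mul_left]
  refine tsum_congr fun n => ?_
  have hw := weight (v := v) hq0 n
  unfold AA
  linear_combination (- (1 - q) ^ 2 * cqv q v ^ 2 * jvR v q (q ^ n) ^ 2) * hw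

theorem bound {q v : ℝ} (hq0 : 0 < q) (hq1 : q < 1) (hv : -1 < v) (f : ℝ → ℝ) (g : L2)
    (hg : ∀ n, g n = ss q v ^ n * f (q ^ n)) (n₀ k : ℤ) :
    (f (q ^ k) - fTrunc q v n₀ f (q ^ k)) ^ 2 ≤
      (∑' m, AA q v m ^ 2) / (ss q v ^ k) ^ 2 * ∑' i : ℕ, HH q v g (n₀ - 1 - (i : ℤ)) ^ 2 := by
  have hs : 0 < ss q v ^ k := zpow_pos (ss_pos hq0) k
  have h1 : ss q v ^ k * (f (q ^ k) - fTrunc q v n₀ f (q ^ k)) =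
      HH q v (HH q v g - proj n₀ (HH q v g)) k := by
    rw [map_sub, HH_sq hq0 hq1 hv, mul_sub, fTrunc_eq hq0 hq1 hv f g hg, ← hg]
    rfl
  have h2 := op_bound hq0 hq1 hv (HH q v g - proj n₀ (HH q v g)) k
  rw [← h1, tail_norm] at h2
  rw [div_mul_eq_mul_div, le_div_iff₀ (by positivity)]
  linarith [mul_pow (ss q v ^ k) (f (q ^ k) - fTrunc q v n₀ f (q ^ k)) 2]

theorem tail_eq {q v : ℝ} (hq0 : 0 < q) (hq1 : q < 1) (hv : -1 < v) (f : ℝ → ℝ) (g : L2)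
    (hg : ∀ n, g n = ss q v ^ n * f (q ^ n)) (n₀ : ℤ) :
    qIntTail q n₀ (fun t => (Fqv q v f t) ^ 2 * t ^ (2 * v + 1 : ℝ)) =
      (1 - q) * ∑' i : ℕ, HH q v g (n₀ - 1 - (i : ℤ)) ^ 2 := by
  unfold qIntTail
  congr 1
  refine tsum_congr fun i => ?_
  rw [← Fqv_eq hq0 hq1 hv f g hg]
  have hw := weight (v := v) hq0 (n₀ - 1 - (i : ℤ))
  linear_combination (Fqv q v f (q ^ (n₀ - 1 - (i : ℤ))) ^ 2) * hw

theorem memL2_conv {q v : ℝ} (hq0 : 0 < q) (f : ℝ → ℝ) :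
    memL2 q v f ↔ Summable fun n : ℤ => (ss q v ^ n * f (q ^ n)) ^ 2 := by
  unfold memL2
  refine summable_congr fun n => ?_
  have hw := weight (v := v) hq0 n
  linear_combination (f (q ^ n) ^ 2) * hw

end QB

/-- `f_a ∈ PW_{q,a}^v`, the pointwise error bound, and uniform
convergence `f_a → f` on `{x ∈ ℝ_q⁺ : x > δ}` as `a → ∞` along `q^{-ℤ}`. -/
theorem bandlimited_approximation (q v : ℝ) (hq0 : 0 < q) (hq1 : q < 1) (hv : -1 < v)
    (f : ℝ → ℝ) (hf : memL2 q v f) :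
    (∀ n₀ : ℤ, memL2 q v (fTrunc q v n₀ f) ∧
      ∀ m : ℤ, (q : ℝ) ^ n₀ < (q : ℝ) ^ m → Fqv q v (fTrunc q v n₀ f) ((q : ℝ) ^ m) = 0) ∧
    (∀ n₀ k : ℤ,
      (f ((q : ℝ) ^ k) - fTrunc q v n₀ f ((q : ℝ) ^ k)) ^ 2 ≤
        cqv q v ^ 2 * qIntInf q (fun t => (jvR v q t) ^ 2 * t ^ (2 * v + 1 : ℝ)) /
            ((q : ℝ) ^ k) ^ (2 * v + 2 : ℝ) *
          qIntTail q n₀ (fun t => (Fqv q v f t) ^ 2 * t ^ (2 * v + 1 : ℝ))) ∧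
    (∀ δ > (0 : ℝ), ∀ ε > (0 : ℝ), ∃ N : ℕ, ∀ m : ℕ, N ≤ m → ∀ k : ℤ,
      δ < (q : ℝ) ^ k →
        |f ((q : ℝ) ^ k) - fTrunc q v (-(m : ℤ)) f ((q : ℝ) ^ k)| < ε) := by
  have hs := QB.ss_pos (v := v) hq0
  let g : QB.L2 := ⟨fun n => QB.ss q v ^ n * f (q ^ n),
    (QB.memL2_iff _).2 ((QB.memL2_conv hq0 f).1 hf)⟩
  have hg : ∀ n, g n = QB.ss q v ^ n * f (q ^ n) := fun n => rfl
  have hT := fun n₀ k => QB.fTrunc_eq hq0 hq1 hv f g hg n₀ k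
  have hB := QB.bound hq0 hq1 hv f g hg
  refine ⟨fun n₀ => ⟨?_, ?_⟩, ?_, ?_⟩
  · rw [QB.memL2_conv hq0]
    simp only [hT]
    exact QB.L2_summable _
  · intro m hm
    have hm' : m < n₀ := (zpow_lt_zpow_iff_right_of_lt_one₀ hq0 hq1).1 hm
    have h := QB.Fqv_eq hq0 hq1 hv (fTrunc q v n₀ f) _ (fun n => (hT n₀ n).symm) m
    rw [QB.HH_sq hq0 hq1 hv, QB.proj_apply, if_neg (by omega)] at h
    exact (mul_eq_zero.1 h).resolve_left (zpow_pos hs m).ne'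
  · intro n₀ k
    refine (hB n₀ k).trans (le_of_eq ?_)
    rw [QB.S_eq hq0, QB.tail_eq hq0 hq1 hv f g hg, QB.ss_zpow hq0]
    ring
  · intro δ hδ ε hε
    set S := ∑' m, QB.AA q v m ^ 2
    have hS : 0 ≤ S := tsum_nonneg fun _ => sq_nonneg _
    have hδ' : 0 < δ ^ (2 * v + 2 : ℝ) := Real.rpow_pos_of_pos hδ _
    have h1 := (tendsto_sum_nat_add fun i : ℕ => QB.HH q v g (-1 - (i : ℤ)) ^ 2).const_mul
      (S / δ ^ (2 * v + 2 : ℝ))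
    rw [mul_zero] at h1
    have h2 := h1.eventually (gt_mem_nhds (show (0 : ℝ) < ε ^ 2 by positivity))
    obtain ⟨N, hN⟩ := Filter.eventually_atTop.1 h2
    refine ⟨N, fun m hm k hk => ?_⟩
    refine abs_lt_of_sq_lt_sq ?_ hε.le
    refine lt_of_le_of_lt ((hB (-(m : ℤ)) k).trans ?_) (hN m hm)
    have h3 : ∀ i : ℕ, -(m : ℤ) - 1 - (i : ℤ) = -1 - ((i + m : ℕ) : ℤ) := by
      intro i; push_cast; ring
    simp only [h3]
    have h4 : δ ^ (2 * v + 2 : ℝ) ≤ (QB.ss q v ^ k) ^ 2 := by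
      rw [← QB.ss_zpow hq0]
      exact Real.rpow_le_rpow hδ.le hk.le (by linarith)
    refine mul_le_mul_of_nonneg_right ?_ (tsum_nonneg fun _ => sq_nonneg _)
    exact div_le_div_of_nonneg_left hS hδ' h4
end
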